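/- Let P be a finite-volume right-angled convex hyperbolic 3-polyhedron with at most one ideal vertex (v_∞(P) ≤ 1). Then P has at least 12 faces: a₂(P) ≥ 12. -/

import Mathlib

open scoped BigOperators

noncomputable section

/-- The Minkowski bilinear form `⟨x,y⟩ = -x₀y₀ + x₁y₁ + ⋯ + xₙyₙ` on `ℝ^{n+1}`. -/
def mink {n : ℕ} (x y : Fin (n + 1) → ℝ) : ℝ :=
  -(x 0 * y 0) + ∑ i : Fin n, x i.succ * y i.succ

/-- The hyperboloid model of the hyperbolic space `ℍⁿ`. -/
def Hyperboloid (n : ℕ) : Set (Fin (n + 1) → ℝ) :=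
  {x | mink x x = -1 ∧ 0 < x 0}

/-- The Klein projection `x ↦ (x₁/x₀, …, xₙ/x₀)` of the hyperboloid onto the unit ball. -/
def kleinMap {n : ℕ} (x : Fin (n + 1) → ℝ) : EuclideanSpace ℝ (Fin n) :=
  WithLp.toLp 2 (fun i => x i.succ / x 0)

/-- Dimension of a subset of a real vector space: the rank of its vector span. -/
def sdim {n : ℕ} (s : Set (EuclideanSpace ℝ (Fin n))) : ℕ :=
  Module.finrank ℝ (vectorSpan ℝ s)

/-- A convex hyperbolic `n`-polyhedron: a finite intersection of hyperbolic half-spaces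
`H_{eᵢ}⁻ = {x : ⟨eᵢ,x⟩ ≤ 0}` (with `⟨eᵢ,eᵢ⟩ = 1`) having nonempty interior
(equivalently, its Klein-model image has nonempty interior in `ℝⁿ`). -/
structure HypPolyhedron (n : ℕ) where
  m : ℕ
  e : Fin m → (Fin (n + 1) → ℝ)
  unit : ∀ i, mink (e i) (e i) = 1
  nonempty_int :
    (interior (kleinMap '' {x ∈ Hyperboloid n | ∀ i, mink (e i) x ≤ 0})).Nonempty

namespace HypPolyhedron

variable {n : ℕ} (P : HypPolyhedron n)

/-- The set of points of the polyhedron in the hyperboloid model. -/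
def carrier : Set (Fin (n + 1) → ℝ) :=
  {x ∈ Hyperboloid n | ∀ i, mink (P.e i) x ≤ 0}

/-- `P̄`: the closure of the Klein-model image of the polyhedron in the closed unit ball. -/
def cl : Set (EuclideanSpace ℝ (Fin n)) :=
  closure (kleinMap '' P.carrier)

/-- The `k`-faces of `P`: the `k`-dimensional (nonempty) exposed faces of `P̄`. -/
def faces (k : ℕ) : Set (Set (EuclideanSpace ℝ (Fin n))) :=
  {F | IsExposed ℝ P.cl F ∧ F.Nonempty ∧ sdim F = k}

/-- `a_k(P)`: the number of `k`-faces of `P`. -/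
def a (k : ℕ) : ℕ := (P.faces k).ncard

/-- Vertices of `P`: the points of `0`-dimensional exposed faces of `P̄`. -/
def verts : Set (EuclideanSpace ℝ (Fin n)) :=
  {v | IsExposed ℝ P.cl {v}}

/-- Ideal vertices: vertices lying on the unit sphere. -/
def idealVerts : Set (EuclideanSpace ℝ (Fin n)) :=
  {v ∈ P.verts | ‖v‖ = 1}

/-- Finite vertices: vertices lying in the open unit ball. -/
def finiteVerts : Set (EuclideanSpace ℝ (Fin n)) :=
  {v ∈ P.verts | ‖v‖ < 1}

/-- `v_∞(P)`: the number of ideal vertices of `P`. -/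
def vInf : ℕ := P.idealVerts.ncard

/-- The bounding hyperplane `H_e` contains the face `F`. -/
def faceInHyperplane (e : Fin (n + 1) → ℝ) (F : Set (EuclideanSpace ℝ (Fin n))) : Prop :=
  ∀ x ∈ P.carrier, kleinMap x ∈ F → mink e x = 0

/-- `P` is right-angled: whenever two distinct bounding hyperplanes both contain an
`(n-2)`-dimensional face of `P`, the corresponding unit normals are orthogonal,
i.e. the dihedral angle is `π/2`. -/
def IsRightAngled : Prop :=
  ∀ i j : Fin P.m, i ≠ j →
    (∃ F ∈ P.faces (n - 2), P.faceInHyperplane (P.e i) F ∧ P.faceInHyperplane (P.e j) F) →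
    mink (P.e i) (P.e j) = 0

/-- `P` has finite volume: `P̄` is the convex hull of its (finitely many) vertices. -/
def FiniteVolume : Prop :=
  P.verts.Finite ∧ P.cl = convexHull ℝ P.verts

/-- `P` is compact: finite volume and all vertices are finite. -/
def IsCompactPoly : Prop :=
  P.FiniteVolume ∧ ∀ v ∈ P.verts, ‖v‖ < 1

/-- `P` is ideal: finite volume and all vertices are ideal. -/
def IsIdeal : Prop :=
  P.FiniteVolume ∧ ∀ v ∈ P.verts, ‖v‖ = 1

end HypPolyhedron

/-- `ν(P) = a_{n-1}(P) + v_∞(P)` ranging over the family `𝒫ⁿ` of finite-volume non-compact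
right-angled convex hyperbolic `n`-polyhedra. -/
def nuSet (n : ℕ) : Set ℕ :=
  {m | ∃ P : HypPolyhedron n,
        P.FiniteVolume ∧ P.IsRightAngled ∧ ¬ P.IsCompactPoly ∧ P.a (n - 1) + P.vInf = m}

/-- `νₙ = sInf {ν(P) : P ∈ 𝒫ⁿ}` (with `sInf ∅ = 0`). -/
def nu (n : ℕ) : ℕ := sInf (nuSet n)

/-- The combinatorial type of the face graph of a right-angled `3`-polyhedron with at most one
ideal vertex: `adj` is adjacency along an edge, `cusp` marks the faces at the ideal vertex. -/
structure FaceGraph (ι : Type*) where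
  adj : ι → ι → Prop
  cusp : ι → Prop
  symm : ∀ {i j}, adj i j → adj j i
  irrefl : ∀ i, ¬ adj i i
  exists_adj : ∀ i, ∃ j, adj i j
  exists_common : ∀ {i j}, adj i j → ∃ k, adj i k ∧ adj j k
  exists_other : ∀ {i j k}, adj i j → ¬ (cusp i ∧ cusp j) → adj i k → adj j k →
    ∃ l, l ≠ k ∧ adj i l ∧ adj j l
  common_le_two : ∀ {i j k l m}, adj i j → adj i k → adj j k → adj i l → adj j l →
    adj i m → adj j m → k = l ∨ k = m ∨ l = m
  common_unique : ∀ {i j k l}, adj i j → cusp i → cusp j → adj i k → adj j k →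
    adj i l → adj j l → k = l
  no_clique : ∀ {i j k l}, adj i j → adj i k → adj i l → adj j k → adj j l → ¬ adj k l
  cycle_cusp : ∀ {i j k l}, adj i j → adj j k → adj k l → adj l i → i ≠ k → j ≠ l →
    ¬ adj i k → ¬ adj j l → cusp i
  no_cusp_triangle : ∀ {i j k}, cusp i → cusp j → cusp k → adj i j → adj i k → ¬ adj j k
  cusp_of_opposite : ∀ {i j k}, cusp j → cusp k → j ≠ k → ¬ adj j k → adj i j → adj i k → cusp i
  exists_cusp_cycle : ∀ {i}, cusp i → ∃ a b c d, cusp a ∧ cusp b ∧ cusp c ∧ cusp d ∧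
    adj a b ∧ adj b c ∧ adj c d ∧ adj d a ∧ a ≠ c ∧ b ≠ d ∧ ¬ adj a c ∧ ¬ adj b d ∧
    ∀ x, cusp x → x = a ∨ x = b ∨ x = c ∨ x = d

namespace FaceGraph

variable {ι : Type*} (G : FaceGraph ι)

/-- A face away from the cusp and from the edges ending at the cusp. -/
def Good (f : ι) : Prop :=
  ¬ G.cusp f ∧ ∀ a b, G.adj f a → G.adj f b → G.adj a b → ¬ (G.cusp a ∧ G.cusp b)

lemma adj_ne {i j : ι} (h : G.adj i j) : i ≠ j := by
  rintro rfl
  exact G.irrefl _ h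

lemma exists_good [Nonempty ι] : ∃ f, G.Good f := by
  by_cases hc : ∃ i, G.cusp i
  swap
  · push Not at hc
    exact ⟨Classical.arbitrary ι, hc _, fun a _ _ _ _ h => hc a h.1⟩
  obtain ⟨i, hi⟩ := hc
  obtain ⟨a, b, c, d, ha, hb, hc, hd, hab, hbc, hcd, hda, hac, hbd, nac, nbd, hall⟩ :=
    G.exists_cusp_cycle hi
  by_contra hno
  obtain ⟨p, hap, hbp⟩ := G.exists_common hab
  obtain ⟨q, hbq, hcq⟩ := G.exists_common hbc
  obtain ⟨r, hcr, hdr⟩ := G.exists_common hcd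
  obtain ⟨s, hds, has⟩ := G.exists_common hda
  have np : ¬ G.cusp p := fun h => G.no_cusp_triangle ha hb h hab hap hbp
  have nq : ¬ G.cusp q := fun h => G.no_cusp_triangle hb hc h hbc hbq hcq
  have nr : ¬ G.cusp r := fun h => G.no_cusp_triangle hc hd h hcd hcr hdr
  have ns : ¬ G.cusp s := fun h => G.no_cusp_triangle hd ha h hda hds has
  have opp_ac : ∀ x, ¬ G.cusp x → G.adj a x → ¬ G.adj c x := fun x hx h1 h2 =>
    hx (G.cusp_of_opposite ha hc hac nac (G.symm h1) (G.symm h2))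
  have opp_bd : ∀ x, ¬ G.cusp x → G.adj b x → ¬ G.adj d x := fun x hx h1 h2 =>
    hx (G.cusp_of_opposite hb hd hbd nbd (G.symm h1) (G.symm h2))
  have hcover : ∀ x, x = a ∨ x = b ∨ x = c ∨ x = d ∨ x = p ∨ x = q ∨ x = r ∨ x = s := by
    intro x
    by_cases hx : G.cusp x
    · rcases hall x hx with h | h | h | h <;> simp [h]
    · by_contra hne
      apply hno
      refine ⟨x, hx, fun u v hxu hxv huv h => hne ?_⟩
      have key : ∀ {s t y}, G.adj s t → G.cusp s → G.cusp t → G.adj s y → G.adj t y →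
          G.adj x s → G.adj x t → x = y := fun hst hs ht h1 h2 h3 h4 =>
        G.common_unique hst hs ht (G.symm h3) (G.symm h4) h1 h2
      have kab := key hab ha hb hap hbp
      have kbc := key hbc hb hc hbq hcq
      have kcd := key hcd hc hd hcr hdr
      have kda := key hda hd ha hds has
      have hxac := opp_ac x hx
      have hxbd := opp_bd x hx
      have hs1 := @G.symm
      have hir := G.irrefl
      rcases hall u h.1 with rfl | rfl | rfl | rfl <;>
        rcases hall v h.2 with rfl | rfl | rfl | rfl <;> grind
  have hir := G.irrefl
  have hsym := @G.symm
  have hps : G.adj p s := by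
    obtain ⟨l, hl, h1, h2⟩ := G.exists_other (k := b) (G.symm hap) (fun h => np h.1)
      (G.symm hbp) hab
    rcases hcover l with rfl | rfl | rfl | rfl | rfl | rfl | rfl | rfl <;> grind
  have hpq : G.adj p q := by
    obtain ⟨l, hl, h1, h2⟩ := G.exists_other (k := a) (G.symm hbp) (fun h => np h.1)
      (G.symm hap) (G.symm hab)
    rcases hcover l with rfl | rfl | rfl | rfl | rfl | rfl | rfl | rfl <;> grind
  obtain ⟨l, hl, h1, h2⟩ := G.exists_other (k := b) hpq (fun h => np h.1)
    (G.symm hbp) (G.symm hbq)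
  have h_pr : ¬ G.adj p r := fun h => np <| G.cycle_cusp (G.symm hbp) hbc hcr (G.symm h)
    (by rintro rfl; exact nr (by grind)) (by grind) (by grind) (by grind)
  have h_qs : ¬ G.adj q s := fun h => nq <| G.cycle_cusp (G.symm hcq) hcd hds (G.symm h)
    (by grind) (by grind) (by grind) (by grind)
  rcases hcover l with rfl | rfl | rfl | rfl | rfl | rfl | rfl | rfl <;> grind

lemma Good.adj_of_common {G : FaceGraph ι} {f m a b : ι} (hf : G.Good f) (hm : m ≠ f)
    (hfm : ¬ G.adj f m) (ha : G.adj f a) (hb : G.adj f b) (hma : G.adj m a) (hmb : G.adj m b)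
    (hab : a ≠ b) : G.adj a b := by
  by_contra h
  exact hf.1 (G.cycle_cusp ha (G.symm hma) hmb (G.symm hb) hm.symm hab hfm h)

/-- Four neighbours of a good face do not form a cycle. -/
lemma Good.not_adj_of_path {G : FaceGraph ι} {f a b c d : ι} (hf : G.Good f)
    (ha : G.adj f a) (hb : G.adj f b) (hc : G.adj f c) (hd : G.adj f d)
    (hab : G.adj a b) (hbc : G.adj b c) (hcd : G.adj c d) (hac : a ≠ c) (hbd : b ≠ d) :
    ¬ G.adj a d := by
  intro had
  have h1 : ¬ G.adj a c := G.no_clique hb ha hc (G.symm hab) hbc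
  have h2 : ¬ G.adj b d := G.no_clique hc hb hd (G.symm hbc) hcd
  exact hf.2 a b ha hb hab ⟨G.cycle_cusp hab hbc hcd (G.symm had) hac hbd h1 h2,
    G.cycle_cusp hbc hcd (G.symm had) hab hbd hac.symm h2 (fun h => h1 (G.symm h))⟩

/-- The face across the edge of two neighbours of a good face. -/
lemma Good.exists_across {G : FaceGraph ι} {f a b : ι} (hf : G.Good f)
    (ha : G.adj f a) (hb : G.adj f b) (hab : G.adj a b) :
    ∃ m, m ≠ f ∧ ¬ G.adj f m ∧ G.adj m a ∧ G.adj m b := by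
  obtain ⟨m, hm, h1, h2⟩ := G.exists_other hab (hf.2 a b ha hb hab) (G.symm ha) (G.symm hb)
  exact ⟨m, hm, fun h => G.no_clique hab (G.symm ha) h1 (G.symm hb) h2 h, G.symm h1, G.symm h2⟩

/-- The next face around a good face. -/
lemma Good.exists_next {G : FaceGraph ι} {f a b : ι} (hf : G.Good f)
    (ha : G.adj f a) (hb : G.adj f b) (hab : G.adj a b) :
    ∃ c, G.adj f c ∧ G.adj b c ∧ c ≠ a := by
  obtain ⟨c, hc, h1, h2⟩ := G.exists_other hb (fun h => hf.1 h.1) ha (G.symm hab)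
  exact ⟨c, h1, h2, hc⟩

lemma card_le_of_nodup [Fintype ι] (l : List ι) (h : l.Nodup) : l.length ≤ Fintype.card ι := by
  classical
  rw [← List.toFinset_card_of_nodup h]
  exact Finset.card_le_univ _

/-- If five neighbours close up around a good face, a twelfth face exists. -/
lemma Good.twelve_le_card_of_pentagon [Fintype ι] {G : FaceGraph ι} {f : ι} (hf : G.Good f)
    (n : ZMod 5 → ι) (hn : ∀ i, G.adj f (n i)) (hn1 : ∀ i, G.adj (n i) (n (i + 1)))
    (hn2 : ∀ i, n i ≠ n (i + 2)) : 12 ≤ Fintype.card ι := by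
  have cases5 : ∀ i j : ZMod 5, j = i ∨ j = i + 1 ∨ j = i + 2 ∨ j + 2 = i ∨ j + 1 = i := by decide
  have nadj : ∀ i, ¬ G.adj (n i) (n (i + 2)) := fun i => by
    have h := hn1 (i + 1)
    rw [add_assoc, one_add_one_eq_two] at h
    exact G.no_clique (hn (i + 1)) (hn i) (hn (i + 2)) (G.symm (hn1 i)) h
  have ninj : Function.Injective n := fun i j h => by
    have h1 := fun i => G.adj_ne (hn1 i)
    rcases cases5 i j with rfl | rfl | rfl | rfl | rfl
    exacts [rfl, (h1 _ h).elim, (hn2 _ h).elim, (hn2 _ h.symm).elim, (h1 _ h.symm).elim]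
  choose m hm hfm hm0 hm1 using fun i => hf.exists_across (hn i) (hn (i + 1)) (hn1 i)
  have hmn : ∀ i j, G.adj (m i) (n j) → j = i ∨ j = i + 1 := by
    intro i j h
    have key : ∀ s t, G.adj (m i) (n s) → G.adj (m i) (n t) → t ≠ s + 2 := by
      rintro s _ hs ht rfl
      exact nadj s (hf.adj_of_common (hm i) (hfm i) (hn _) (hn _) hs ht (hn2 s))
    have e1 : ∀ i j : ZMod 5, j + 1 = i → i + 1 = j + 2 := by decide
    rcases cases5 i j with h' | h' | h' | h' | h'
    · exact Or.inl h'
    · exact Or.inr h'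
    · exact (key _ _ (hm0 i) h h').elim
    · exact (key _ _ h (hm0 i) h'.symm).elim
    · exact (key _ _ h (hm1 i) (e1 i j h')).elim
  have minj : Function.Injective m := fun i j h => by
    have h0 := hmn i j (h ▸ hm0 j)
    have h1 := hmn i (j + 1) (h ▸ hm1 j)
    have e : ∀ i j : ZMod 5, (j = i ∨ j = i + 1) → (j + 1 = i ∨ j + 1 = i + 1) → i = j := by decide
    exact e i j h0 h1
  have mm2 : ∀ i, ¬ G.adj (m i) (m (i + 2)) := fun i h => by
    have e1 : ∀ i : ZMod 5, ¬ (i + 1 + 1 = i ∨ i + 1 + 1 = i + 1) := by decide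
    have e2 : ∀ i : ZMod 5, ¬ (i + 1 = i + 2 ∨ i + 1 = i + 2 + 1) := by decide
    have e3 : ∀ i : ZMod 5, i ≠ i + 2 := by decide
    have h1 : G.adj (n (i + 1 + 1)) (m (i + 2)) := by
      rw [add_assoc, one_add_one_eq_two]
      exact G.symm (hm0 _)
    have h2 : ¬ G.adj (m i) (n (i + 1 + 1)) := fun h => e1 i (hmn _ _ h)
    have h3 : ¬ G.adj (n (i + 1)) (m (i + 2)) := fun h => e2 i (hmn _ _ (G.symm h))
    have h4 : m i ≠ n (i + 1 + 1) := fun h => hfm i (h ▸ hn _)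
    have h5 : n (i + 1) ≠ m (i + 2) := fun h => hfm (i + 2) (h ▸ hn _)
    exact hf.2 _ _ (hn (i + 1)) (hn (i + 1 + 1)) (hn1 _)
      ⟨G.cycle_cusp (hn1 _) h1 (G.symm h) (hm1 i) h5 h4.symm h3 (fun h => h2 (G.symm h)),
        G.cycle_cusp h1 (G.symm h) (hm1 i) (hn1 _) h4.symm h5.symm (fun h => h2 (G.symm h))
          (fun h => h3 (G.symm h))⟩
  let g : Option (ZMod 5 ⊕ ZMod 5) → ι := fun o => o.elim f (Sum.elim n m)
  have ginj : Function.Injective g := by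
    have h1 : ∀ i, f ≠ n i := fun i => G.adj_ne (hn i)
    have h2 : ∀ i j, n i ≠ m j := fun i j h => hfm j (h ▸ hn i)
    rintro (_ | i | i) (_ | j | j) h <;> simp only [g, Option.elim, Sum.elim_inl, Sum.elim_inr] at h
    · rfl
    · exact (h1 _ h).elim
    · exact (hm _ h.symm).elim
    · exact (h1 _ h.symm).elim
    · rw [ninj h]
    · exact (h2 _ _ h).elim
    · exact (hm _ h).elim
    · exact (h2 _ _ h.symm).elim
    · rw [minj h]
  have hcard : Fintype.card (Option (ZMod 5 ⊕ ZMod 5)) = 11 := by simp [ZMod.card]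
  by_contra hlt
  have hle := Fintype.card_le_of_injective g ginj
  have gsurj : Function.Surjective g :=
    ((Fintype.bijective_iff_injective_and_card g).2 ⟨ginj, by omega⟩).2
  have hcover : ∀ x, x = f ∨ (∃ i, x = n i) ∨ ∃ i, x = m i := by
    intro x
    obtain ⟨_ | i | i, rfl⟩ := gsurj x
    exacts [Or.inl rfl, Or.inr (Or.inl ⟨i, rfl⟩), Or.inr (Or.inr ⟨i, rfl⟩)]
  have nn : ∀ i j, G.adj (n i) (n j) → j = i + 1 ∨ j + 1 = i := by
    intro i j h
    rcases cases5 i j with rfl | h' | rfl | rfl | h'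
    · exact (G.irrefl _ h).elim
    · exact Or.inl h'
    · exact (nadj _ h).elim
    · exact (nadj _ (G.symm h)).elim
    · exact Or.inr h'
  have next : ∀ i, ¬ G.cusp (m i) → G.adj (m i) (m (i + 1)) := by
    intro i hi
    obtain ⟨l, hl, h1, h2⟩ := G.exists_other (k := n i) (hm1 i) (fun h => hi h.1) (hm0 i)
      (G.symm (hn1 i))
    rcases hcover l with rfl | ⟨j, rfl⟩ | ⟨j, rfl⟩
    · exact (hfm i (G.symm h1)).elim
    · rcases hmn i j h1 with rfl | rfl
      · exact (hl rfl).elim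
      · exact (G.irrefl _ h2).elim
    · rcases hmn j (i + 1) (G.symm h2) with h | h
      · exact h ▸ h1
      · exact (G.irrefl _ (add_right_cancel h ▸ h1)).elim
  have prev : ∀ i, ¬ G.cusp (m (i + 1)) → G.adj (m (i + 1)) (m i) := by
    intro i hi
    obtain ⟨l, hl, h1, h2⟩ := G.exists_other (k := n (i + 1 + 1)) (hm0 (i + 1)) (fun h => hi h.1)
      (hm1 (i + 1)) (hn1 (i + 1))
    rcases hcover l with rfl | ⟨j, rfl⟩ | ⟨j, rfl⟩
    · exact (hfm _ (G.symm h1)).elim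
    · rcases hmn _ j h1 with rfl | rfl
      · exact (G.irrefl _ h2).elim
      · exact (hl rfl).elim
    · rcases hmn j (i + 1) (G.symm h2) with h | h
      · exact (G.irrefl _ (h ▸ h1)).elim
      · exact (add_right_cancel h) ▸ h1
  have allcusp : ∀ i, G.cusp (m i) := by
    intro i
    by_contra hi
    obtain ⟨l, hl, h1, h2⟩ := G.exists_other (k := n (i + 1)) (next i hi) (fun h => hi h.1)
      (hm1 i) (hm0 (i + 1))
    rcases hcover l with rfl | ⟨j, rfl⟩ | ⟨j, rfl⟩
    · exact (hfm i (G.symm h1)).elim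
    · have := hmn _ _ h1
      have := hmn _ _ h2
      have e : ∀ i j : ZMod 5, (j = i ∨ j = i + 1) → (j = i + 1 ∨ j = i + 1 + 1) → j = i + 1 := by
        decide
      exact hl (by rw [e i j ‹_› ‹_›])
    · rcases cases5 i j with rfl | rfl | rfl | rfl | rfl
      · exact G.irrefl _ h1
      · exact G.irrefl _ h2
      · exact mm2 _ h1
      · exact mm2 _ (G.symm h1)
      · rw [add_assoc, one_add_one_eq_two] at h2
        exact mm2 _ (G.symm h2)
  obtain ⟨a, b, c, d, -, -, -, -, -, -, -, -, -, -, -, -, hall⟩ := G.exists_cusp_cycle (allcusp 0)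
  classical
  have hsub : Finset.univ.image m ⊆ {a, b, c, d} := by
    intro x hx
    obtain ⟨i, -, rfl⟩ := Finset.mem_image.1 hx
    simpa using hall _ (allcusp i)
  have h5 := Finset.card_le_card hsub
  rw [Finset.card_image_of_injective _ minj, Finset.card_univ, ZMod.card] at h5
  exact absurd (h5.trans Finset.card_le_four) (by norm_num)

theorem twelve_le_card (G : FaceGraph ι) [Fintype ι] [Nonempty ι] : 12 ≤ Fintype.card ι := by
  obtain ⟨f, hf⟩ := G.exists_good
  obtain ⟨n₁, h1⟩ := G.exists_adj f
  obtain ⟨n₂, h2, h12⟩ := G.exists_common h1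
  obtain ⟨n₃, h3, h23, d13⟩ := hf.exists_next h1 h2 h12
  obtain ⟨n₄, h4, h34, d24⟩ := hf.exists_next h2 h3 h23
  obtain ⟨n₅, h5, h45, d35⟩ := hf.exists_next h3 h4 h34
  obtain ⟨n₆, h6, h56, d46⟩ := hf.exists_next h4 h5 h45
  have a13 : ¬ G.adj n₁ n₃ := G.no_clique h2 h1 h3 (G.symm h12) h23
  have a24 : ¬ G.adj n₂ n₄ := G.no_clique h3 h2 h4 (G.symm h23) h34
  have a35 : ¬ G.adj n₃ n₅ := G.no_clique h4 h3 h5 (G.symm h34) h45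
  have a46 : ¬ G.adj n₄ n₆ := G.no_clique h5 h4 h6 (G.symm h45) h56
  have a14 := hf.not_adj_of_path h1 h2 h3 h4 h12 h23 h34 d13.symm d24.symm
  have a25 := hf.not_adj_of_path h2 h3 h4 h5 h23 h34 h45 d24.symm d35.symm
  have a36 := hf.not_adj_of_path h3 h4 h5 h6 h34 h45 h56 d35.symm d46.symm
  have hsym := @G.symm
  have hne := @G.adj_ne
  have d14 : n₁ ≠ n₄ := by rintro rfl; exact a24 (hsym h12)
  have d25 : n₂ ≠ n₅ := by rintro rfl; exact a35 (hsym h23)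
  by_cases h61 : n₆ = n₁
  · subst h61
    refine hf.twelve_le_card_of_pentagon ![n₆, n₂, n₃, n₄, n₅] ?_ ?_ ?_
    · intro i; fin_cases i <;> assumption
    · intro i; fin_cases i <;> assumption
    · intro i
      fin_cases i
      exacts [d13.symm, d24.symm, d35.symm, d46.symm, d25.symm]
  have a15 : ¬ G.adj n₁ n₅ := fun h => by
    rcases G.common_le_two h5 h4 (hsym h45) h6 h56 h1 (hsym h) with h' | h' | h'
    exacts [d46 h'.symm, d14 h'.symm, h61 h']
  obtain ⟨m₁, e1, f1, p1, q1⟩ := hf.exists_across h1 h2 h12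
  obtain ⟨m₂, e2, f2, p2, q2⟩ := hf.exists_across h2 h3 h23
  obtain ⟨m₃, e3, f3, p3, q3⟩ := hf.exists_across h3 h4 h34
  obtain ⟨m₄, e4, f4, p4, q4⟩ := hf.exists_across h4 h5 h45
  obtain ⟨m₅, e5, f5, p5, q5⟩ := hf.exists_across h5 h6 h56
  have key : ∀ {m a b}, m ≠ f → ¬ G.adj f m → G.adj f a → G.adj f b → a ≠ b → ¬ G.adj a b →
      G.adj m a → ¬ G.adj m b := fun x1 x2 x3 x4 x5 x6 x7 x8 =>
    x6 (hf.adj_of_common x1 x2 x3 x4 x7 x8 x5)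
  have d36 : n₃ ≠ n₆ := by rintro rfl; exact a46 (hsym h34)
  have d15 : n₁ ≠ n₅ := by rintro rfl; exact a25 (hsym h12)
  have d26 : n₂ ≠ n₆ := by rintro rfl; exact a36 (hsym h23)
  have m12 : m₁ ≠ m₂ := by rintro rfl; exact key e1 f1 h1 h3 d13.symm a13 p1 q2
  have m13 : m₁ ≠ m₃ := by rintro rfl; exact key e1 f1 h1 h3 d13.symm a13 p1 p3
  have m14 : m₁ ≠ m₄ := by rintro rfl; exact key e1 f1 h1 h4 d14 a14 p1 p4
  have m15 : m₁ ≠ m₅ := by rintro rfl; exact key e1 f1 h1 h5 d15 a15 p1 p5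
  have m23 : m₂ ≠ m₃ := by rintro rfl; exact key e2 f2 h2 h4 d24.symm a24 p2 q3
  have m24 : m₂ ≠ m₄ := by rintro rfl; exact key e2 f2 h2 h4 d24.symm a24 p2 p4
  have m25 : m₂ ≠ m₅ := by rintro rfl; exact key e2 f2 h2 h5 d25 a25 p2 p5
  have m34 : m₃ ≠ m₄ := by rintro rfl; exact key e3 f3 h3 h5 d35.symm a35 p3 q4
  have m35 : m₃ ≠ m₅ := by rintro rfl; exact key e3 f3 h3 h5 d35.symm a35 p3 p5
  have m45 : m₄ ≠ m₅ := by rintro rfl; exact key e4 f4 h4 h6 d46.symm a46 p4 q5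
  have nm : ∀ {a m}, G.adj f a → ¬ G.adj f m → a ≠ m := fun x y h => y (h ▸ x)
  have hnodup : [f, n₁, n₂, n₃, n₄, n₅, n₆, m₁, m₂, m₃, m₄, m₅].Nodup := by
    simp only [List.nodup_cons, List.mem_cons, List.not_mem_nil, List.nodup_nil, or_false, not_or,
      not_false_eq_true, and_true]
    refine ⟨⟨hne h1, hne h2, hne h3, hne h4, hne h5, hne h6, e1.symm, e2.symm, e3.symm, e4.symm,
        e5.symm⟩,
      ⟨hne h12, d13.symm, d14, d15, Ne.symm h61, nm h1 f1, nm h1 f2, nm h1 f3, nm h1 f4, nm h1 f5⟩,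
      ⟨hne h23, d24.symm, d25, d26, nm h2 f1, nm h2 f2, nm h2 f3, nm h2 f4, nm h2 f5⟩,
      ⟨hne h34, d35.symm, d36, nm h3 f1, nm h3 f2, nm h3 f3, nm h3 f4, nm h3 f5⟩,
      ⟨hne h45, d46.symm, nm h4 f1, nm h4 f2, nm h4 f3, nm h4 f4, nm h4 f5⟩,
      ⟨hne h56, nm h5 f1, nm h5 f2, nm h5 f3, nm h5 f4, nm h5 f5⟩,
      ⟨nm h6 f1, nm h6 f2, nm h6 f3, nm h6 f4, nm h6 f5⟩,
      ⟨m12, m13, m14, m15⟩, ⟨m23, m24, m25⟩, ⟨m34, m35⟩, m45⟩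
  exact card_le_of_nodup _ hnodup

end FaceGraph

section Minkowski

variable {n : ℕ} (x y z : Fin (n + 1) → ℝ) (r : ℝ)

lemma mink_comm : mink x y = mink y x := by
  simp only [mink, mul_comm]

lemma mink_add_right : mink x (y + z) = mink x y + mink x z := by
  simp only [mink, Pi.add_apply, mul_add, Finset.sum_add_distrib]
  ring

lemma mink_smul_right : mink x (r • y) = r * mink x y := by
  simp only [mink, Pi.smul_apply, smul_eq_mul, mul_add, Finset.mul_sum]
  congr 1
  · ring
  · exact Finset.sum_congr rfl fun i _ => by ring

lemma mink_add_left : mink (x + y) z = mink x z + mink y z := by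
  rw [mink_comm, mink_add_right, mink_comm z, mink_comm z]

lemma mink_smul_left : mink (r • x) y = r * mink x y := by
  rw [mink_comm, mink_smul_right, mink_comm]

lemma mink_neg_right : mink x (-y) = -mink x y := by
  rw [← neg_one_smul ℝ, mink_smul_right, neg_one_mul]

lemma mink_neg_left : mink (-x) y = -mink x y := by
  rw [mink_comm, mink_neg_right, mink_comm]

lemma mink_sub_right : mink x (y - z) = mink x y - mink x z := by
  rw [sub_eq_add_neg, mink_add_right, mink_neg_right, sub_eq_add_neg]

lemma mink_sub_left : mink (x - y) z = mink x z - mink y z := by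
  rw [sub_eq_add_neg, mink_add_left, mink_neg_left, sub_eq_add_neg]

lemma mink_zero_right : mink x 0 = 0 := by
  simp [mink]

/-- The linear functional `⟨x, ·⟩`. -/
def minkL : (Fin (n + 1) → ℝ) →ₗ[ℝ] ℝ where
  toFun := mink x
  map_add' := mink_add_right x
  map_smul' r y := mink_smul_right x y r

@[simp] lemma minkL_apply : minkL x y = mink x y := rfl

variable {x y}

lemma mink_self_nonneg (h : x 0 = 0) : 0 ≤ mink x x := by
  simp only [mink, h, mul_zero, neg_zero, zero_add]
  exact Finset.sum_nonneg fun i _ => mul_self_nonneg _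

lemma eq_zero_of_mink_self (h : x 0 = 0) (hx : mink x x ≤ 0) : x = 0 := by
  have h1 := le_antisymm hx (mink_self_nonneg h)
  simp only [mink, h, mul_zero, neg_zero, zero_add] at h1
  rw [Finset.sum_eq_zero_iff_of_nonneg fun i _ => mul_self_nonneg _] at h1
  funext i
  refine Fin.cases h (fun i => ?_) i
  simpa using h1 i (Finset.mem_univ i)

/-- Orthogonal causal vectors are proportional. -/
lemma smul_eq_smul_of_causal (hx : mink x x ≤ 0) (hy : mink y y ≤ 0) (hxy : mink x y = 0) :
    x 0 • y = y 0 • x := by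
  rw [← sub_eq_zero]
  apply eq_zero_of_mink_self
  · simp [mul_comm]
  · have hyx : mink y x = 0 := by rw [mink_comm, hxy]
    simp only [mink_sub_left, mink_sub_right, mink_smul_left, mink_smul_right, hxy, hyx]
    nlinarith [mul_nonneg (sq_nonneg (x 0)) (neg_nonneg.2 hy),
      mul_nonneg (sq_nonneg (y 0)) (neg_nonneg.2 hx)]

lemma eq_zero_of_timelike (hx : mink x x < 0) (hy : mink y y ≤ 0) (hxy : mink x y = 0) :
    y = 0 := by
  have h := smul_eq_smul_of_causal hx.le hy hxy
  have h1 := congrArg (mink x) h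
  rw [mink_smul_right, mink_smul_right, hxy, mul_zero, eq_comm, mul_eq_zero] at h1
  exact eq_zero_of_mink_self (h1.resolve_right hx.ne) hy

lemma mink_neg_of_future (hx : mink x x < 0) (hx0 : 0 < x 0) (hy : mink y y ≤ 0) (hy0 : 0 < y 0) :
    mink x y < 0 := by
  have h : 0 ≤ mink (x 0 • y - y 0 • x) (x 0 • y - y 0 • x) :=
    mink_self_nonneg (by simp [mul_comm])
  simp only [mink_sub_left, mink_sub_right, mink_smul_left, mink_smul_right, mink_comm y x] at h
  by_contra hc
  nlinarith [mul_pos hy0 hy0, mul_pos hx0 hy0, mul_pos (mul_pos hy0 hy0) (neg_pos.2 hx),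
    mul_nonneg (sq_nonneg (x 0)) (neg_nonneg.2 hy),
    mul_nonneg (mul_pos hx0 hy0).le (not_lt.1 hc)]

/-- Three linear conditions on `ℝ⁴` have a nonzero solution. -/
lemma exists_mink_orthogonal (a b c : Fin 4 → ℝ) :
    ∃ d : Fin 4 → ℝ, d ≠ 0 ∧ mink (n := 3) a d = 0 ∧ mink (n := 3) b d = 0 ∧
      mink (n := 3) c d = 0 := by
  let T : (Fin 4 → ℝ) →ₗ[ℝ] (Fin 3 → ℝ) :=
    LinearMap.pi ![minkL (n := 3) a, minkL (n := 3) b, minkL (n := 3) c]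
  have hT : LinearMap.ker T ≠ ⊥ := LinearMap.ker_ne_bot_of_finrank_lt (by simp)
  obtain ⟨d, hd, hd0⟩ := Submodule.exists_mem_ne_zero_of_ne_bot hT
  rw [LinearMap.mem_ker] at hd
  exact ⟨d, hd0, congrFun hd 0, congrFun hd 1, congrFun hd 2⟩

lemma exists_mink_orthogonal_horizontal (a b : Fin 4 → ℝ) :
    ∃ d : Fin 4 → ℝ, d ≠ 0 ∧ d 0 = 0 ∧ mink (n := 3) a d = 0 ∧ mink (n := 3) b d = 0 := by
  obtain ⟨d, hd, ha, hb, hc⟩ := exists_mink_orthogonal a b (Pi.single 0 1)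
  refine ⟨d, hd, ?_, ha, hb⟩
  simpa [mink] using hc

/-- The expansion of a vector in a Lorentz-orthonormal basis. -/
lemma eq_of_orthonormal {a b d v z : Fin 4 → ℝ} (haa : mink (n := 3) a a = 1)
    (hbb : mink (n := 3) b b = 1) (hzz : mink (n := 3) z z = -1) (hdd : mink (n := 3) d d = 1)
    (hab : mink (n := 3) a b = 0) (haz : mink (n := 3) a z = 0) (had : mink (n := 3) a d = 0)
    (hbz : mink (n := 3) b z = 0) (hbd : mink (n := 3) b d = 0) (hzd : mink (n := 3) z d = 0)
    (hav : mink (n := 3) a v = 0) (hbv : mink (n := 3) b v = 0) :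
    v = (-mink (n := 3) z v) • z + (mink (n := 3) d v) • d := by
  let T : (Fin 4 → ℝ) →ₗ[ℝ] (Fin 4 → ℝ) :=
    LinearMap.pi ![minkL (n := 3) a, minkL (n := 3) b, minkL (n := 3) z, minkL (n := 3) d]
  have hba := mink_comm (n := 3) a b ▸ hab
  have hza := mink_comm (n := 3) a z ▸ haz
  have hda := mink_comm (n := 3) a d ▸ had
  have hzb := mink_comm (n := 3) b z ▸ hbz
  have hdb := mink_comm (n := 3) b d ▸ hbd
  have hdz := mink_comm (n := 3) z d ▸ hzd
  have hsurj : Function.Surjective T := by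
    intro w
    refine ⟨w 0 • a + w 1 • b + (-w 2) • z + w 3 • d, ?_⟩
    funext i
    fin_cases i <;>
      simp [T, mink_add_right, mink_smul_right, mink_neg_right, haa, hbb, hzz, hdd, hab, haz, had,
        hbz, hbd, hzd, hba, hza, hda, hzb, hdb, hdz]
  apply LinearMap.injective_iff_surjective.2 hsurj
  funext i
  fin_cases i <;>
    simp [T, mink_add_right, mink_smul_right, mink_neg_right, hzz, hdd, haz, had, hbz, hbd, hzd,
      hdz, hav, hbv]

end Minkowski

/-- A finite system of homogeneous inequalities with a strict solution contains an irredundant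
equivalent subsystem. -/
lemma exists_irredundant {V ι : Type*} [AddCommGroup V] [Module ℝ V] (W : Submodule ℝ V)
    (S : Finset ι) (f : ι → V →ₗ[ℝ] ℝ) {p : V} (hpW : p ∈ W) (hp : ∀ l ∈ S, f l p < 0) :
    ∃ J ⊆ S, (∀ v ∈ W, (∀ l ∈ J, f l v ≤ 0) → ∀ l ∈ S, f l v ≤ 0) ∧
      ∀ k ∈ J, ∃ z ∈ W, f k z = 0 ∧ ∀ l ∈ J, l ≠ k → f l z < 0 := by
  classical
  let A : Finset (Finset ι) :=
    S.powerset.filter fun J => ∀ v ∈ W, (∀ l ∈ J, f l v ≤ 0) → ∀ l ∈ S, f l v ≤ 0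
  have hA : A.Nonempty := ⟨S, by simp [A]⟩
  obtain ⟨J, hJA, hmin⟩ := A.exists_min_image Finset.card hA
  obtain ⟨hJS, hJ⟩ := Finset.mem_filter.1 hJA
  rw [Finset.mem_powerset] at hJS
  refine ⟨J, hJS, hJ, fun k hk => ?_⟩
  have hk' : J.erase k ∉ A := fun h =>
    absurd (hmin _ h) (not_le.2 (Finset.card_erase_lt_of_mem hk))
  simp only [A, Finset.mem_filter, Finset.mem_powerset, not_and] at hk'
  have hk2 := hk' ((Finset.erase_subset _ _).trans hJS)
  push Not at hk2
  obtain ⟨v, hvW, hv, l, hl, hlv⟩ := hk2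
  have hkv : 0 < f k v := by
    by_contra h
    refine absurd (hJ v hvW (fun l hl => ?_) l hl) (not_le.2 hlv)
    by_cases hlk : l = k
    · exact hlk ▸ not_lt.1 h
    · exact hv l (Finset.mem_erase.2 ⟨hlk, hl⟩)
  refine ⟨f k v • p - f k p • v, W.sub_mem (W.smul_mem _ hpW) (W.smul_mem _ hvW), ?_, ?_⟩
  · simp [mul_comm]
  · intro l hl hlk
    have h1 := hv l (Finset.mem_erase.2 ⟨hlk, hl⟩)
    have h2 := hp l (hJS hl)
    have h3 := hp k (hJS hk)
    simp only [map_sub, map_smul, smul_eq_mul]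
    nlinarith [mul_pos hkv (neg_pos.2 h2), mul_nonneg (neg_pos.2 h3).le (neg_nonneg.2 h1)]

lemma exists_pos_forall_add_mul_neg {ι : Type*} (J : Finset ι) (a b : ι → ℝ)
    (h : ∀ l ∈ J, a l < 0) : ∃ ε > 0, ∀ l ∈ J, a l + ε * b l < 0 := by
  have h1 : ∀ᶠ ε in nhdsWithin (0 : ℝ) (Set.Ioi 0), ∀ l ∈ J, a l + ε * b l < 0 := by
    rw [Filter.eventually_all_finset]
    intro l hl
    have hc : Continuous fun ε : ℝ => a l + ε * b l := by fun_prop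
    have h2 : ∀ᶠ ε in nhds (0 : ℝ), a l + ε * b l < 0 :=
      hc.continuousAt.eventually_lt continuousAt_const (by simpa using h l hl)
    exact h2.filter_mono nhdsWithin_le_nhds
  obtain ⟨ε, h2, h3⟩ := (h1.and self_mem_nhdsWithin).exists
  exact ⟨ε, h3, h2⟩

/-- The normals of an irredundant right-angled polyhedral cone contained in the future light cone
of `ℝ^{3,1}` and having at most one isotropic ray. -/
structure RightAngledCone (ι : Type*) where
  e : ι → Fin (3 + 1) → ℝ
  p : Fin (3 + 1) → ℝ
  y : ι → Fin (3 + 1) → ℝ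
  unit : ∀ i, mink (e i) (e i) = 1
  p_neg : ∀ i, mink (e i) p < 0
  p_time : mink p p < 0
  y_zero : ∀ i, mink (e i) (y i) = 0
  y_neg : ∀ i j, j ≠ i → mink (e j) (y i) < 0
  causal : ∀ x, (∀ i, mink (e i) x ≤ 0) → x ≠ 0 → 0 < x 0 ∧ mink x x ≤ 0
  right_angled : ∀ i j, i ≠ j → ∀ x d, (∀ l, mink (e l) x ≤ 0) → (∀ l, mink (e l) (x + d) ≤ 0) →
    0 < x 0 → d ≠ 0 → d 0 = 0 → mink (e i) x = 0 → mink (e j) x = 0 →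
    mink (e i) d = 0 → mink (e j) d = 0 → mink (e i) (e j) = 0
  null_unique : ∀ x x', (∀ i, mink (e i) x ≤ 0) → (∀ i, mink (e i) x' ≤ 0) → x ≠ 0 → x' ≠ 0 →
    mink x x = 0 → mink x' x' = 0 → x 0 • x' = x' 0 • x

namespace RightAngledCone

variable {ι : Type*} (K : RightAngledCone ι)

/-- The cone itself. -/
def Mem (x : Fin (3 + 1) → ℝ) : Prop := ∀ i, mink (K.e i) x ≤ 0

lemma add_ne_zero (i j : ι) : K.e i + K.e j ≠ 0 := fun h => by
  have h1 := congrArg (mink K.p) h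
  rw [mink_add_right, mink_zero_right, mink_comm, mink_comm K.p] at h1
  linarith [K.p_neg i, K.p_neg j]

lemma mink_eq_zero_of_walls {i k : ι} (hik : i ≠ k) (J : Finset ι)
    (hJ : ∀ v, mink (K.e i) v = 0 → (∀ l ∈ J, mink (K.e l) v ≤ 0) → K.Mem v)
    {x : Fin (3 + 1) → ℝ} (hxi : mink (K.e i) x = 0) (hxk : mink (K.e k) x = 0)
    (hx : ∀ l ∈ J, l ≠ k → mink (K.e l) x < 0) : mink (K.e i) (K.e k) = 0 := by
  classical
  obtain ⟨d, hd, hd0, hid, hkd⟩ := exists_mink_orthogonal_horizontal (K.e i) (K.e k)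
  obtain ⟨ε, hε, hs⟩ := exists_pos_forall_add_mul_neg (J.erase k) (fun l => mink (K.e l) x)
    (fun l => mink (K.e l) d)
    (fun l hl => hx l (Finset.mem_erase.1 hl).2 (Finset.mem_erase.1 hl).1)
  have hCx : K.Mem x := hJ x hxi fun l hl => by
    by_cases h : l = k
    · rw [h, hxk]
    · exact (hx l hl h).le
  have hCd : K.Mem (x + ε • d) := hJ _ (by rw [mink_add_right, mink_smul_right, hxi, hid]; simp)
    fun l hl => by
      rw [mink_add_right, mink_smul_right]
      by_cases h : l = k
      · rw [h, hxk, hkd]; simp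
      · exact (hs l (Finset.mem_erase.2 ⟨h, hl⟩)).le
  have hεd : ε • d ≠ 0 := smul_ne_zero hε.ne' hd
  by_cases h0 : x = 0
  · rw [h0, zero_add] at hCd
    have := (K.causal _ hCd hεd).1
    simp [hd0] at this
  · exact K.right_angled i k hik x (ε • d) hCx hCd (K.causal x hCx h0).1 hεd (by simp [hd0]) hxi hxk
      (by rw [mink_smul_right, hid, mul_zero]) (by rw [mink_smul_right, hkd, mul_zero])

lemma exists_walls [Fintype ι] (i : ι) : ∃ J : Finset ι, i ∉ J ∧
    (∀ v, mink (K.e i) v = 0 → (∀ l ∈ J, mink (K.e l) v ≤ 0) → K.Mem v) ∧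
    ∀ k ∈ J, mink (K.e i) (K.e k) = 0 := by
  classical
  obtain ⟨J, hJS, hJ, hz⟩ := exists_irredundant (LinearMap.ker (minkL (K.e i)))
    (Finset.univ.erase i) (fun l => minkL (K.e l)) (p := K.y i) (by simp [K.y_zero])
    (fun l hl => K.y_neg i l (Finset.mem_erase.1 hl).1)
  have hiJ : i ∉ J := fun h => by simpa using hJS h
  have hJ' : ∀ v, mink (K.e i) v = 0 → (∀ l ∈ J, mink (K.e l) v ≤ 0) → K.Mem v := by
    intro v hv h l
    by_cases hl : l = i
    · rw [hl, hv]
    · exact hJ v (by simpa using hv) h l (by simp [hl])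
  refine ⟨J, hiJ, hJ', fun k hk => ?_⟩
  obtain ⟨z, hzi, hzk, hzJ⟩ := hz k hk
  exact K.mink_eq_zero_of_walls (fun h => hiJ (h ▸ hk)) J hJ' (by simpa using hzi) hzk hzJ

lemma exists_orthogonal [Fintype ι] (i : ι) : ∃ j, mink (K.e i) (K.e j) = 0 := by
  obtain ⟨J, -, hJ, hk⟩ := K.exists_walls i
  rcases J.eq_empty_or_nonempty with rfl | ⟨k, h⟩
  · obtain ⟨d, hd, hd0, hid, -⟩ := exists_mink_orthogonal_horizontal (K.e i) (K.e i)
    have := (K.causal d (hJ d hid (by simp)) hd).1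
    simp [hd0] at this
  · exact ⟨k, hk k h⟩

lemma mink_nonpos [Fintype ι] {i j : ι} (hij : i ≠ j) : mink (K.e i) (K.e j) ≤ 0 := by
  classical
  obtain ⟨J, -, hJ, hk⟩ := K.exists_walls i
  by_contra! hg
  have hjJ : j ∉ J := fun h => hg.ne' (hk j h)
  have hv0 : mink (K.e i) (K.y j - mink (K.e i) (K.y j) • K.e i) = 0 := by
    rw [mink_sub_right, mink_smul_right, K.unit]; ring
  have hvk : ∀ l ∈ J, mink (K.e l) (K.y j - mink (K.e i) (K.y j) • K.e i) ≤ 0 := fun l hl => by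
    rw [mink_sub_right, mink_smul_right, mink_comm (K.e l) (K.e i), hk l hl, mul_zero, sub_zero]
    exact (K.y_neg j l (fun h => hjJ (h ▸ hl))).le
  have h := hJ _ hv0 hvk j
  rw [mink_sub_right, mink_smul_right, K.y_zero, mink_comm (K.e j) (K.e i)] at h
  nlinarith [K.y_neg j i hij]

lemma mink_le_neg_one [Fintype ι] {i j : ι} (hij : i ≠ j) (hg : mink (K.e i) (K.e j) ≠ 0) :
    mink (K.e i) (K.e j) ≤ -1 := by
  classical
  have hneg := lt_of_le_of_ne (K.mink_nonpos hij) hg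
  by_contra! hlt
  set g := mink (K.e i) (K.e j) with hgdef
  set s := mink (K.e i) K.p
  set t := mink (K.e j) K.p
  have hs : s < 0 := K.p_neg i
  have ht : t < 0 := K.p_neg j
  have hD : 0 < 1 - g ^ 2 := by nlinarith
  have hji : mink (K.e j) (K.e i) = g := mink_comm _ _
  have hJ : ∀ v, mink (K.e i) v = 0 → (∀ l ∈ Finset.univ.erase i, mink (K.e l) v ≤ 0) →
      K.Mem v := by
    intro v hv h l
    by_cases hl : l = i
    · rw [hl, hv]
    · exact h l (by simp [hl])
  apply hg
  refine K.mink_eq_zero_of_walls hij (Finset.univ.erase i) hJ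
    (x := (1 - g ^ 2) • K.p - (s - g * t) • K.e i - (t - g * s) • K.e j) ?_ ?_ ?_
  · simp only [mink_sub_right, mink_smul_right, K.unit]
    ring
  · simp only [mink_sub_right, mink_smul_right, K.unit, hji]
    ring
  · intro l hl hlj
    have hli : l ≠ i := (Finset.mem_erase.1 hl).1
    simp only [mink_sub_right, mink_smul_right]
    have h1 := mul_pos hD (neg_pos.2 (K.p_neg l))
    have h2 := mul_nonneg (show 0 ≤ -(s - g * t) by nlinarith)
      (neg_nonneg.2 (K.mink_nonpos hli))
    have h3 := mul_nonneg (show 0 ≤ -(t - g * s) by nlinarith)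
      (neg_nonneg.2 (K.mink_nonpos hlj))
    nlinarith

/-- An isotropic ray of the cone. -/
def IsCusp (o : Fin (3 + 1) → ℝ) : Prop := K.Mem o ∧ o ≠ 0 ∧ mink o o = 0

lemma ne_of_mink_eq_zero {i j : ι} (h : mink (K.e i) (K.e j) = 0) : i ≠ j := by
  rintro rfl
  rw [K.unit] at h
  exact one_ne_zero h

lemma mink_eq_zero_of_isCusp {o o' v : Fin (3 + 1) → ℝ} (ho : K.IsCusp o) (ho' : K.IsCusp o')
    (h : mink v o = 0) : mink v o' = 0 := by
  have h1 := congrArg (mink v) (K.null_unique o o' ho.1 ho'.1 ho.2.1 ho'.2.1 ho.2.2 ho'.2.2)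
  rw [mink_smul_right, mink_smul_right, h, mul_zero] at h1
  exact (mul_eq_zero.1 h1).resolve_left (K.causal o ho.1 ho.2.1).1.ne'

/-- Lorentz-orthonormal coordinates on the span of an edge. -/
structure EdgeFrame (i j : ι) (z d : Fin (3 + 1) → ℝ) : Prop where
  zz : mink z z = -1
  dd : mink d d = 1
  zd : mink z d = 0
  iz : mink (K.e i) z = 0
  jz : mink (K.e j) z = 0
  idd : mink (K.e i) d = 0
  jd : mink (K.e j) d = 0
  neg : ∀ l, l ≠ i → l ≠ j → mink (K.e l) z < 0
  expand : ∀ v, mink (K.e i) v = 0 → mink (K.e j) v = 0 → v = (-mink z v) • z + (mink d v) • d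

lemma exists_edgeFrame [Fintype ι] {i j : ι} (hij : mink (K.e i) (K.e j) = 0) :
    ∃ z d, K.EdgeFrame i j z d := by
  set s := mink (K.e i) K.p
  set t := mink (K.e j) K.p
  have hs : s < 0 := K.p_neg i
  have ht : t < 0 := K.p_neg j
  have hji : mink (K.e j) (K.e i) = 0 := mink_comm _ _ ▸ hij
  set w := K.p - s • K.e i - t • K.e j
  have hpi : mink K.p (K.e i) = s := mink_comm _ _
  have hpj : mink K.p (K.e j) = t := mink_comm _ _
  have hww : mink w w < 0 := by
    have : mink w w = mink K.p K.p - s ^ 2 - t ^ 2 := by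
      simp only [w, mink_sub_left, mink_sub_right, mink_smul_left, mink_smul_right, K.unit, hij,
        hji, hpi, hpj]
      ring
    rw [this]
    nlinarith [K.p_time, sq_nonneg s, sq_nonneg t]
  have hiw : mink (K.e i) w = 0 := by
    simp only [w, mink_sub_right, mink_smul_right, K.unit, hij]
    ring
  have hjw : mink (K.e j) w = 0 := by
    simp only [w, mink_sub_right, mink_smul_right, K.unit, hji]
    ring
  have hlw : ∀ l, l ≠ i → l ≠ j → mink (K.e l) w < 0 := fun l hli hlj => by
    simp only [w, mink_sub_right, mink_smul_right]
    nlinarith [K.p_neg l, mul_nonneg (neg_pos.2 hs).le (neg_nonneg.2 (K.mink_nonpos hli)),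
      mul_nonneg (neg_pos.2 ht).le (neg_nonneg.2 (K.mink_nonpos hlj))]
  obtain ⟨u, hu, hiu, hju, hwu⟩ := exists_mink_orthogonal (K.e i) (K.e j) w
  have huu : 0 < mink u u := by
    by_contra! h
    exact hu (eq_zero_of_timelike hww h hwu)
  have hr : (0 : ℝ) < (Real.sqrt (-mink w w))⁻¹ := inv_pos.2 (Real.sqrt_pos.2 (neg_pos.2 hww))
  have hzz : mink ((Real.sqrt (-mink w w))⁻¹ • w) ((Real.sqrt (-mink w w))⁻¹ • w) = -1 := by
    rw [mink_smul_left, mink_smul_right, ← mul_assoc, ← mul_inv,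
      Real.mul_self_sqrt (neg_pos.2 hww).le, inv_neg, neg_mul, inv_mul_cancel₀ hww.ne]
  have hdd : mink ((Real.sqrt (mink u u))⁻¹ • u) ((Real.sqrt (mink u u))⁻¹ • u) = 1 := by
    rw [mink_smul_left, mink_smul_right, ← mul_assoc, ← mul_inv, Real.mul_self_sqrt huu.le,
      inv_mul_cancel₀ huu.ne']
  set z := (Real.sqrt (-mink w w))⁻¹ • w
  set d := (Real.sqrt (mink u u))⁻¹ • u
  have hzd : mink z d = 0 := by simp only [z, d, mink_smul_left, mink_smul_right, hwu, mul_zero]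
  have hiz : mink (K.e i) z = 0 := by simp only [z, mink_smul_right, hiw, mul_zero]
  have hjz : mink (K.e j) z = 0 := by simp only [z, mink_smul_right, hjw, mul_zero]
  have hid : mink (K.e i) d = 0 := by simp only [d, mink_smul_right, hiu, mul_zero]
  have hjd : mink (K.e j) d = 0 := by simp only [d, mink_smul_right, hju, mul_zero]
  exact ⟨z, d, hzz, hdd, hzd, hiz, hjz, hid, hjd,
    fun l hli hlj => by
      simp only [z, mink_smul_right]
      exact mul_neg_of_pos_of_neg hr (hlw l hli hlj),
    fun v hiv hjv => eq_of_orthonormal (K.unit i) (K.unit j) hzz hdd hij hiz hid hjz hjd hzd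
      hiv hjv⟩

namespace EdgeFrame

variable {K} {i j : ι} {z d : Fin (3 + 1) → ℝ}

lemma mem (F : K.EdgeFrame i j z d) : K.Mem z := fun l => by
  by_cases hi : l = i
  · rw [hi, F.iz]
  by_cases hj : l = j
  · rw [hj, F.jz]
  exact (F.neg l hi hj).le

lemma reverse (F : K.EdgeFrame i j z d) : K.EdgeFrame i j z (-d) where
  zz := F.zz
  dd := by rw [mink_neg_left, mink_neg_right, F.dd, neg_neg]
  zd := by rw [mink_neg_right, F.zd, neg_zero]
  iz := F.iz
  jz := F.jz
  idd := by rw [mink_neg_right, F.idd, neg_zero]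
  jd := by rw [mink_neg_right, F.jd, neg_zero]
  neg := F.neg
  expand v h1 h2 := by
    rw [mink_neg_left, smul_neg, neg_smul (mink d v), neg_neg]
    exact F.expand v h1 h2

/-- The coordinates of the normals of the faces meeting both faces of an edge. -/
lemma coords (F : K.EdgeFrame i j z d) {k l : ι} (hik : mink (K.e i) (K.e k) = 0)
    (hjk : mink (K.e j) (K.e k) = 0) :
    mink (K.e k) z < 0 ∧ mink (K.e k) (K.e l) =
      -(mink (K.e k) z * mink (K.e l) z) + mink (K.e k) d * mink (K.e l) d := by
  refine ⟨F.neg k (K.ne_of_mink_eq_zero hik).symm (K.ne_of_mink_eq_zero hjk).symm, ?_⟩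
  have h := congrArg (mink (K.e l)) (F.expand (K.e k) hik hjk)
  rw [mink_add_right, mink_smul_right, mink_smul_right, mink_comm z (K.e k),
    mink_comm d (K.e k)] at h
  rw [mink_comm, h]
  ring

lemma sq_eq (F : K.EdgeFrame i j z d) {k : ι} (hik : mink (K.e i) (K.e k) = 0)
    (hjk : mink (K.e j) (K.e k) = 0) : mink (K.e k) d ^ 2 = 1 + mink (K.e k) z ^ 2 := by
  have h := (F.coords hik hjk (l := k)).2
  rw [K.unit] at h
  linarith

lemma ne_zero (F : K.EdgeFrame i j z d) {k : ι} (hik : mink (K.e i) (K.e k) = 0)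
    (hjk : mink (K.e j) (K.e k) = 0) : mink (K.e k) d ≠ 0 := fun h => by
  have := F.sq_eq hik hjk
  rw [h] at this
  nlinarith [sq_nonneg (mink (K.e k) z)]

lemma eq_of_pos [Fintype ι] (F : K.EdgeFrame i j z d) {k l : ι} (hik : mink (K.e i) (K.e k) = 0)
    (hjk : mink (K.e j) (K.e k) = 0) (hil : mink (K.e i) (K.e l) = 0)
    (hjl : mink (K.e j) (K.e l) = 0) (hk : 0 < mink (K.e k) d) (hl : 0 < mink (K.e l) d) :
    k = l := by
  by_contra hne
  have h1 := F.sq_eq hik hjk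
  have h2 := F.sq_eq hil hjl
  have h3 := F.coords hik hjk (l := l)
  have h4 := F.coords hil hjl (l := k)
  have h5 := K.mink_nonpos hne
  have h6 := (abs_lt.1 (abs_lt_of_sq_lt_sq (a := mink (K.e k) z) (by linarith) hk.le)).1
  have h7 := (abs_lt.1 (abs_lt_of_sq_lt_sq (a := mink (K.e l) z) (by linarith) hl.le)).1
  have h8 : -mink (K.e k) z * -mink (K.e l) z < mink (K.e k) d * mink (K.e l) d :=
    mul_lt_mul'' (by linarith) (by linarith) (by linarith [h3.1]) (by linarith [h4.1])
  linarith [h3.2]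

lemma mink_add_pos (F : K.EdgeFrame i j z d) {k : ι} (hik : mink (K.e i) (K.e k) = 0)
    (hjk : mink (K.e j) (K.e k) = 0) (hk : 0 < mink (K.e k) d) :
    0 < mink (K.e k) (z + d) := by
  have h1 := F.sq_eq hik hjk
  have h6 := (abs_lt.1 (abs_lt_of_sq_lt_sq (a := mink (K.e k) z) (by linarith) hk.le)).1
  rw [mink_add_right]
  linarith

lemma not_orthogonal (F : K.EdgeFrame i j z d) {k l : ι} (hik : mink (K.e i) (K.e k) = 0)
    (hjk : mink (K.e j) (K.e k) = 0) (hil : mink (K.e i) (K.e l) = 0)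
    (hjl : mink (K.e j) (K.e l) = 0) : mink (K.e k) (K.e l) ≠ 0 := by
  intro h
  have h1 := F.sq_eq hik hjk
  have h2 := F.sq_eq hil hjl
  have h3 := (F.coords hik hjk (l := l)).2
  have h4 : mink (K.e k) d * mink (K.e l) d = mink (K.e k) z * mink (K.e l) z := by linarith
  have h5 := congrArg (· ^ 2) h4
  simp only [mul_pow, h1, h2] at h5
  nlinarith [sq_nonneg (mink (K.e k) z), sq_nonneg (mink (K.e l) z)]

/-- Each direction of an edge ends at a third face or at a cusp. -/
lemma exists_end [Fintype ι] (F : K.EdgeFrame i j z d) :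
    (∃ k, mink (K.e i) (K.e k) = 0 ∧ mink (K.e j) (K.e k) = 0 ∧ 0 < mink (K.e k) d) ∨
      K.Mem (z + d) := by
  classical
  by_contra! hcon
  obtain ⟨hno, hmem⟩ := hcon
  simp only [Mem, not_forall, not_le] at hmem
  obtain ⟨k, hk⟩ := hmem
  rw [mink_add_right] at hk
  have hkz := F.mem k
  replace hk : -mink (K.e k) z < mink (K.e k) d := by linarith
  have hkd : 0 < mink (K.e k) d := by linarith
  set t := -mink (K.e k) z / mink (K.e k) d with ht
  have ht0 : 0 ≤ t := div_nonneg (neg_nonneg.2 hkz) hkd.le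
  have ht1 : t < 1 := by rwa [ht, div_lt_one hkd]
  have hkt : t * mink (K.e k) d = -mink (K.e k) z := div_mul_cancel₀ _ hkd.ne'
  have hkw : mink (K.e k) (z + t • d) = 0 := by
    rw [mink_add_right, mink_smul_right, hkt]; ring
  have hww : mink (z + t • d) (z + t • d) < 0 := by
    simp only [mink_add_left, mink_add_right, mink_smul_left, mink_smul_right, F.zz, F.dd, F.zd,
      mink_comm d z]
    nlinarith
  have key : ∀ s, mink (K.e s) z = 0 → mink (K.e s) d = 0 → mink (K.e s) (K.e k) = 0 := by
    intro s hz hd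
    by_contra hg
    have hsk : s ≠ k := by
      rintro rfl
      exact hkd.ne' hd
    have h1 := K.mink_le_neg_one hsk hg
    refine K.add_ne_zero s k (eq_zero_of_timelike hww ?_ ?_)
    · simp only [mink_add_left, mink_add_right, K.unit, mink_comm (K.e k) (K.e s)]
      linarith
    · rw [mink_comm, mink_add_left, hkw, mink_add_right, mink_smul_right, hz, hd]
      ring
  exact absurd (hno k (key i F.iz F.idd) (key j F.jz F.jd)) (not_le.2 hkd)

lemma isCusp (F : K.EdgeFrame i j z d) (h : K.Mem (z + d)) : K.IsCusp (z + d) := by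
  refine ⟨h, fun h0 => ?_, ?_⟩
  · have := congrArg (mink z) h0
    rw [mink_add_right, F.zz, F.zd, mink_zero_right] at this
    norm_num at this
  · simp only [mink_add_left, mink_add_right, F.zz, F.dd, F.zd, mink_comm d z]
    norm_num

end EdgeFrame

lemma exists_edgeFrame_of_isCusp [Fintype ι] {i j : ι} (hij : mink (K.e i) (K.e j) = 0)
    {o : Fin (3 + 1) → ℝ} (ho : K.IsCusp o) (hio : mink (K.e i) o = 0)
    (hjo : mink (K.e j) o = 0) :
    ∃ z d, K.EdgeFrame i j z d ∧ ∃ α : ℝ, 0 < α ∧ o = α • (z + d) := by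
  obtain ⟨z, d, F⟩ := K.exists_edgeFrame hij
  have hz : z ≠ 0 := by
    rintro rfl
    have := F.zz
    rw [mink_zero_right] at this
    norm_num at this
  have hzt : mink z z < 0 := by rw [F.zz]; norm_num
  have hα : 0 < -mink z o := neg_pos.2 (mink_neg_of_future hzt (K.causal z F.mem hz).1 ho.2.2.le
    (K.causal o ho.1 ho.2.1).1)
  have he := F.expand o hio hjo
  have hsq : mink d o ^ 2 = (-mink z o) ^ 2 := by
    have h := congrArg (mink o) he
    rw [ho.2.2, mink_add_right, mink_smul_right, mink_smul_right, mink_comm o z,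
      mink_comm o d] at h
    linarith
  rcases sq_eq_sq_iff_eq_or_eq_neg.1 hsq with h | h
  · exact ⟨z, d, F, _, hα, by rw [smul_add]; rwa [h] at he⟩
  · refine ⟨z, -d, F.reverse, _, hα, ?_⟩
    rw [smul_add, smul_neg, ← neg_smul]
    rwa [h] at he

lemma mem_of_smul {α : ℝ} (hα : 0 < α) {v : Fin (3 + 1) → ℝ} (h : K.Mem (α • v)) : K.Mem v :=
  fun i => by
    have := h i
    rw [mink_smul_right] at this
    exact nonpos_of_mul_nonpos_right this hα

/-- The face `i` reaches an isotropic ray along one of its edges. -/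
def Cusped (i : ι) : Prop :=
  ∃ j o, mink (K.e i) (K.e j) = 0 ∧ K.IsCusp o ∧ mink (K.e i) o = 0 ∧ mink (K.e j) o = 0

lemma Cusped.mink_eq_zero {i : ι} (h : K.Cusped i) {o : Fin (3 + 1) → ℝ} (ho : K.IsCusp o) :
    mink (K.e i) o = 0 := by
  obtain ⟨_, _, -, ho', h1, -⟩ := h
  exact K.mink_eq_zero_of_isCusp ho' ho h1

lemma exists_common [Fintype ι] {i j : ι} (hij : mink (K.e i) (K.e j) = 0) :
    ∃ k, mink (K.e i) (K.e k) = 0 ∧ mink (K.e j) (K.e k) = 0 := by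
  obtain ⟨z, d, F⟩ := K.exists_edgeFrame hij
  rcases F.exists_end with ⟨k, h1, h2, -⟩ | h
  · exact ⟨k, h1, h2⟩
  rcases F.reverse.exists_end with ⟨k, h1, h2, -⟩ | h'
  · exact ⟨k, h1, h2⟩
  have h0 := K.mink_eq_zero_of_isCusp (v := z + d) (F.isCusp h) (F.reverse.isCusp h')
    (F.isCusp h).2.2
  simp only [mink_add_left, mink_add_right, mink_neg_right, F.zz, F.dd, F.zd, mink_comm d z] at h0
  norm_num at h0

lemma EdgeFrame.cusped {i j : ι} {z d : Fin (3 + 1) → ℝ} (F : K.EdgeFrame i j z d)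
    (hij : mink (K.e i) (K.e j) = 0) (h : K.Mem (z + d)) : K.Cusped i ∧ K.Cusped j := by
  have hi : mink (K.e i) (z + d) = 0 := by rw [mink_add_right, F.iz, F.idd, add_zero]
  have hj : mink (K.e j) (z + d) = 0 := by rw [mink_add_right, F.jz, F.jd, add_zero]
  exact ⟨⟨j, _, hij, F.isCusp h, hi, hj⟩, ⟨i, _, mink_comm _ _ ▸ hij, F.isCusp h, hj, hi⟩⟩

lemma exists_other [Fintype ι] {i j k : ι} (hij : mink (K.e i) (K.e j) = 0)
    (hc : ¬ (K.Cusped i ∧ K.Cusped j)) :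
    ∃ l, l ≠ k ∧ mink (K.e i) (K.e l) = 0 ∧ mink (K.e j) (K.e l) = 0 := by
  obtain ⟨z, d, F⟩ := K.exists_edgeFrame hij
  obtain ⟨a, h1, h2, ha⟩ := F.exists_end.resolve_right fun h => hc (F.cusped K hij h)
  obtain ⟨b, h3, h4, hb⟩ := F.reverse.exists_end.resolve_right
    fun h => hc (F.reverse.cusped K hij h)
  by_cases hk : a = k
  · refine ⟨b, fun hbk => ?_, h3, h4⟩
    rw [hbk, ← hk, mink_neg_right] at hb
    linarith
  · exact ⟨a, hk, h1, h2⟩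

lemma common_le_two [Fintype ι] {i j k l m : ι} (hij : mink (K.e i) (K.e j) = 0)
    (hik : mink (K.e i) (K.e k) = 0) (hjk : mink (K.e j) (K.e k) = 0)
    (hil : mink (K.e i) (K.e l) = 0) (hjl : mink (K.e j) (K.e l) = 0)
    (him : mink (K.e i) (K.e m) = 0) (hjm : mink (K.e j) (K.e m) = 0) :
    k = l ∨ k = m ∨ l = m := by
  obtain ⟨z, d, F⟩ := K.exists_edgeFrame hij
  have hneg : ∀ {s}, mink (K.e s) d < 0 → 0 < mink (K.e s) (-d) := fun h => by
    rw [mink_neg_right]; linarith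
  rcases (F.ne_zero hik hjk).lt_or_gt with hk | hk <;>
  rcases (F.ne_zero hil hjl).lt_or_gt with hl | hl <;>
  rcases (F.ne_zero him hjm).lt_or_gt with hm | hm
  · exact .inl (F.reverse.eq_of_pos hik hjk hil hjl (hneg hk) (hneg hl))
  · exact .inl (F.reverse.eq_of_pos hik hjk hil hjl (hneg hk) (hneg hl))
  · exact .inr (.inl (F.reverse.eq_of_pos hik hjk him hjm (hneg hk) (hneg hm)))
  · exact .inr (.inr (F.eq_of_pos hil hjl him hjm hl hm))
  · exact .inr (.inr (F.reverse.eq_of_pos hil hjl him hjm (hneg hl) (hneg hm)))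
  · exact .inr (.inl (F.eq_of_pos hik hjk him hjm hk hm))
  · exact .inl (F.eq_of_pos hik hjk hil hjl hk hl)
  · exact .inl (F.eq_of_pos hik hjk hil hjl hk hl)

lemma common_unique [Fintype ι] {i j k l : ι} (hij : mink (K.e i) (K.e j) = 0)
    (hi : K.Cusped i) (hj : K.Cusped j) (hik : mink (K.e i) (K.e k) = 0)
    (hjk : mink (K.e j) (K.e k) = 0) (hil : mink (K.e i) (K.e l) = 0)
    (hjl : mink (K.e j) (K.e l) = 0) : k = l := by
  obtain ⟨_, o, -, ho, hio, -⟩ := hi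
  obtain ⟨z, d, F, α, hα, rfl⟩ := K.exists_edgeFrame_of_isCusp hij ho hio (hj.mink_eq_zero K ho)
  have hneg : ∀ {s}, mink (K.e i) (K.e s) = 0 → mink (K.e j) (K.e s) = 0 →
      0 < mink (K.e s) (-d) := fun {s} h1 h2 => by
    rw [mink_neg_right, neg_pos]
    refine (F.ne_zero h1 h2).lt_of_le (not_lt.1 fun h => ?_)
    exact absurd (K.mem_of_smul hα ho.1 s) (not_le.2 (F.mink_add_pos h1 h2 h))
  exact F.reverse.eq_of_pos hik hjk hil hjl (hneg hik hjk) (hneg hil hjl)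

lemma no_cusp_triangle [Fintype ι] {i j k : ι} {o : Fin (3 + 1) → ℝ} (ho : K.IsCusp o)
    (hi : mink (K.e i) o = 0) (hj : mink (K.e j) o = 0) (hk : mink (K.e k) o = 0)
    (hij : mink (K.e i) (K.e j) = 0) (hik : mink (K.e i) (K.e k) = 0) :
    mink (K.e j) (K.e k) ≠ 0 := by
  intro hjk
  obtain ⟨z, d, F, α, hα, rfl⟩ := K.exists_edgeFrame_of_isCusp hij ho hi hj
  rw [mink_smul_right, mink_add_right] at hk
  have h1 := (mul_eq_zero.1 hk).resolve_left hα.ne'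
  have h2 := F.sq_eq hik hjk
  rw [eq_neg_of_add_eq_zero_right h1] at h2
  linarith [neg_sq (mink (K.e k) z)]

/-- Two non-adjacent faces through an isotropic ray have normals summing to a multiple of it. -/
lemma add_eq_smul_of_isCusp [Fintype ι] {j k : ι} {o : Fin (3 + 1) → ℝ} (ho : K.IsCusp o)
    (hj : mink (K.e j) o = 0) (hk : mink (K.e k) o = 0) (hjk : j ≠ k)
    (hg : mink (K.e j) (K.e k) ≠ 0) : ∃ c : ℝ, c ≠ 0 ∧ K.e j + K.e k = c • o := by
  have h1 := K.mink_le_neg_one hjk hg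
  have ho0 := (K.causal o ho.1 ho.2.1).1
  have h := smul_eq_smul_of_causal ho.2.2.le (y := K.e j + K.e k)
    (by
      simp only [mink_add_left, mink_add_right, K.unit, mink_comm (K.e k) (K.e j)]
      linarith)
    (by rw [mink_comm, mink_add_left, hj, hk, add_zero])
  have he : K.e j + K.e k = ((o 0)⁻¹ * (K.e j + K.e k) 0) • o := by
    rw [mul_smul, ← h, smul_smul, inv_mul_cancel₀ ho0.ne', one_smul]
  refine ⟨_, fun h0 => K.add_ne_zero j k ?_, he⟩
  rw [he, h0, zero_smul]

lemma exists_opposite [Fintype ι] {s : ι} {o : Fin (3 + 1) → ℝ} (ho : K.IsCusp o)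
    (hs : mink (K.e s) o = 0) :
    ∃ l, mink (K.e l) o = 0 ∧ mink (K.e s) (K.e l) ≠ 0 ∧ s ≠ l := by
  classical
  by_contra! hno
  obtain ⟨ε, hε, h⟩ := exists_pos_forall_add_mul_neg
    (Finset.univ.filter fun l => mink (K.e l) o < 0) (fun l => mink (K.e l) o)
    (fun l => -mink (K.e l) (K.e s)) (fun l hl => by simpa using hl)
  have hmem : K.Mem (o - ε • K.e s) := fun l => by
    rw [mink_sub_right, mink_smul_right]
    rcases (ho.1 l).lt_or_eq with hl | hl
    · linarith [h l (by simpa using hl)]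
    · by_cases h0 : mink (K.e s) (K.e l) = 0
      · rw [hl, mink_comm, h0]
        simp
      · rw [← hno l hl h0, hs, K.unit]
        linarith
  have hself : mink (o - ε • K.e s) (o - ε • K.e s) = ε ^ 2 := by
    simp only [mink_sub_left, mink_sub_right, mink_smul_left, mink_smul_right, ho.2.2, hs,
      mink_comm o (K.e s), K.unit]
    ring
  have hne : o - ε • K.e s ≠ 0 := fun h0 => by
    rw [h0, mink_zero_right] at hself
    exact (pow_pos hε 2).ne hself
  have := (K.causal _ hmem hne).2
  rw [hself] at this
  exact absurd this (not_le.2 (pow_pos hε 2))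

lemma mink_eq_neg_one_of_isCusp [Fintype ι] {j k : ι} {o : Fin (3 + 1) → ℝ} (ho : K.IsCusp o)
    (hj : mink (K.e j) o = 0) (hk : mink (K.e k) o = 0) (hjk : j ≠ k)
    (hg : mink (K.e j) (K.e k) ≠ 0) : mink (K.e j) (K.e k) = -1 := by
  obtain ⟨c, -, hc⟩ := K.add_eq_smul_of_isCusp ho hj hk hjk hg
  have h := congrArg (mink (K.e j)) hc
  rw [mink_add_right, mink_smul_right, hj, K.unit] at h
  linarith

/-- A face through an isotropic ray is opposite to at most one other face. -/
lemma opposite_unique [Fintype ι] {i j k : ι} {o : Fin (3 + 1) → ℝ} (ho : K.IsCusp o)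
    (hi : mink (K.e i) o = 0) (hj : mink (K.e j) o = 0) (hk : mink (K.e k) o = 0)
    (hij : i ≠ j) (hik : i ≠ k) (gij : mink (K.e i) (K.e j) ≠ 0)
    (gik : mink (K.e i) (K.e k) ≠ 0) : j = k := by
  by_contra hjk
  obtain ⟨c, -, hc⟩ := K.add_eq_smul_of_isCusp ho hi hj hij gij
  have h := congrArg (mink (K.e k)) hc
  rw [mink_add_right, mink_smul_right, hk, mink_comm, K.mink_eq_neg_one_of_isCusp ho hi hk hik gik,
    mink_comm] at h
  linarith [K.mink_nonpos hjk]

lemma cycle_cusp [Fintype ι] {i j k l : ι} (hij : mink (K.e i) (K.e j) = 0)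
    (hjk : mink (K.e j) (K.e k) = 0) (hkl : mink (K.e k) (K.e l) = 0)
    (hli : mink (K.e l) (K.e i) = 0) (hik : i ≠ k) (hjl : j ≠ l)
    (gik : mink (K.e i) (K.e k) ≠ 0) (gjl : mink (K.e j) (K.e l) ≠ 0) : K.Cusped i := by
  have h1 := K.mink_le_neg_one hik gik
  have h2 := K.mink_le_neg_one hjl gjl
  have hv : mink (K.e i + K.e k) (K.e i + K.e k) = 2 + 2 * mink (K.e i) (K.e k) := by
    simp only [mink_add_left, mink_add_right, K.unit, mink_comm (K.e k) (K.e i)]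
    ring
  have hw : mink (K.e j + K.e l) (K.e j + K.e l) = 2 + 2 * mink (K.e j) (K.e l) := by
    simp only [mink_add_left, mink_add_right, K.unit, mink_comm (K.e l) (K.e j)]
    ring
  have hvw : mink (K.e i + K.e k) (K.e j + K.e l) = 0 := by
    simp only [mink_add_left, mink_add_right, hij, hkl, mink_comm (K.e k) (K.e j), hjk,
      mink_comm (K.e i) (K.e l), hli]
    ring
  have hg : mink (K.e i) (K.e k) = -1 := by
    by_contra hne
    exact K.add_ne_zero j l (eq_zero_of_timelike (by rw [hv]; linarith [lt_of_le_of_ne h1 hne])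
      (by rw [hw]; linarith) hvw)
  have hi : mink (K.e i) (K.e i + K.e k) = 0 := by
    rw [mink_add_right, K.unit, hg]; norm_num
  have hk : mink (K.e k) (K.e i + K.e k) = 0 := by
    rw [mink_add_right, K.unit, mink_comm, hg]; norm_num
  refine ⟨j, K.e i + K.e k, hij, ⟨fun s => ?_, K.add_ne_zero i k, ?_⟩, hi, ?_⟩
  · by_cases hsi : s = i
    · rw [hsi, hi]
    by_cases hsk : s = k
    · rw [hsk, hk]
    rw [mink_add_right]
    linarith [K.mink_nonpos hsi, K.mink_nonpos hsk]
  · rw [hv, hg]; norm_num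
  · rw [mink_add_right, mink_comm, hij, hjk, add_zero]

lemma exists_cusp_cycle [Fintype ι] {i : ι} (hi : K.Cusped i) : ∃ a b c d,
    K.Cusped a ∧ K.Cusped b ∧ K.Cusped c ∧ K.Cusped d ∧
    mink (K.e a) (K.e b) = 0 ∧ mink (K.e b) (K.e c) = 0 ∧ mink (K.e c) (K.e d) = 0 ∧
    mink (K.e d) (K.e a) = 0 ∧ a ≠ c ∧ b ≠ d ∧ mink (K.e a) (K.e c) ≠ 0 ∧
    mink (K.e b) (K.e d) ≠ 0 ∧ ∀ x, K.Cusped x → x = a ∨ x = b ∨ x = c ∨ x = d := by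
  obtain ⟨j, o, hij, ho, hio, hjo⟩ := hi
  obtain ⟨k, hko, gik, hik⟩ := K.exists_opposite ho hio
  obtain ⟨l, hlo, gjl, hjl⟩ := K.exists_opposite ho hjo
  have hji : mink (K.e j) (K.e i) = 0 := mink_comm _ _ ▸ hij
  have hjk : mink (K.e j) (K.e k) = 0 := by
    obtain ⟨c, -, hc⟩ := K.add_eq_smul_of_isCusp ho hio hko hik gik
    have h := congrArg (mink (K.e j)) hc
    rwa [mink_add_right, mink_smul_right, hjo, mul_zero, hji, zero_add] at h
  obtain ⟨c, -, hc⟩ := K.add_eq_smul_of_isCusp ho hjo hlo hjl gjl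
  have hil : mink (K.e i) (K.e l) = 0 := by
    have h := congrArg (mink (K.e i)) hc
    rwa [mink_add_right, mink_smul_right, hio, mul_zero, hij, zero_add] at h
  have hkj : mink (K.e k) (K.e j) = 0 := mink_comm _ _ ▸ hjk
  have hli : mink (K.e l) (K.e i) = 0 := mink_comm _ _ ▸ hil
  have hkl : mink (K.e k) (K.e l) = 0 := by
    have h := congrArg (mink (K.e k)) hc
    rwa [mink_add_right, mink_smul_right, hko, mul_zero, hkj, zero_add] at h
  refine ⟨i, j, k, l, ⟨j, o, hij, ho, hio, hjo⟩, ⟨i, o, hji, ho, hjo, hio⟩,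
    ⟨j, o, hkj, ho, hko, hjo⟩, ⟨i, o, hli, ho, hlo, hio⟩, hij, hjk, hkl, hli, hik, hjl, gik, gjl,
    fun x hx => ?_⟩
  have hxo := hx.mink_eq_zero K ho
  by_contra! hne
  obtain ⟨hxi, hxj, hxk, hxl⟩ := hne
  refine K.no_cusp_triangle ho hio hjo hxo hij ?_ ?_
  · by_contra g
    exact hxk (K.opposite_unique ho hio hxo hko hxi.symm hik g gik)
  · by_contra g
    exact hxl (K.opposite_unique ho hjo hxo hlo hxj.symm hjl g gjl)

/-- The adjacency pattern of the faces. -/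
def toFaceGraph [Fintype ι] : FaceGraph ι where
  adj i j := mink (K.e i) (K.e j) = 0
  cusp := K.Cusped
  symm h := mink_comm _ _ ▸ h
  irrefl i h := K.ne_of_mink_eq_zero h rfl
  exists_adj := K.exists_orthogonal
  exists_common := K.exists_common
  exists_other hij hc _ _ := K.exists_other hij hc
  common_le_two := K.common_le_two
  common_unique := K.common_unique
  no_clique hij hik hil hjk hjl := by
    obtain ⟨z, d, F⟩ := K.exists_edgeFrame hij
    exact F.not_orthogonal hik hjk hil hjl
  cycle_cusp := K.cycle_cusp
  no_cusp_triangle hi hj hk hij hik := by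
    obtain ⟨_, o, -, ho, hio, -⟩ := hi
    exact K.no_cusp_triangle ho hio (hj.mink_eq_zero K ho) (hk.mink_eq_zero K ho) hij hik
  cusp_of_opposite {i j k} hj hk hjk gjk hij hik := by
    obtain ⟨_, o, -, ho, hjo, -⟩ := hj
    obtain ⟨c, hc0, hc⟩ := K.add_eq_smul_of_isCusp ho hjo (hk.mink_eq_zero K ho) hjk gjk
    have h := congrArg (mink (K.e i)) hc
    rw [mink_add_right, mink_smul_right, hij, hik, add_zero, eq_comm] at h
    exact ⟨j, o, hij, ho, (mul_eq_zero.1 h).resolve_left hc0, hjo⟩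
  exists_cusp_cycle := K.exists_cusp_cycle

end RightAngledCone

section KleinModel

variable {n : ℕ} (x z : Fin (n + 1) → ℝ) (y w : EuclideanSpace ℝ (Fin n)) (t : ℝ)

/-- The spatial part of a vector. -/
def spatial : EuclideanSpace ℝ (Fin n) := WithLp.toLp 2 fun i => x i.succ

/-- The point of the affine chart `x₀ = 1` over a point of the Klein model. -/
def lift : Fin (n + 1) → ℝ := Fin.cons 1 fun i => y i

/-- The purely spatial vector with a given spatial part. -/
def horizontal : Fin (n + 1) → ℝ := Fin.cons 0 fun i => w i

@[simp] lemma lift_zero : lift y 0 = 1 := rfl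

@[simp] lemma horizontal_zero : horizontal w 0 = 0 := rfl

@[simp] lemma spatial_lift : spatial (lift y) = y := rfl

@[simp] lemma spatial_horizontal : spatial (horizontal w) = w := rfl

variable {x z} in
lemma ext_spatial (h0 : x 0 = z 0) (h : spatial x = spatial z) : x = z := by
  funext i
  refine Fin.cases h0 (fun i => ?_) i
  exact congrArg (fun v : EuclideanSpace ℝ (Fin n) => v i) h

lemma mink_eq : mink x z = -(x 0 * z 0) + inner ℝ (spatial x) (spatial z) := by
  simp [mink, spatial, PiLp.inner_apply, mul_comm]

lemma mink_lift : mink x (lift y) = -x 0 + inner ℝ (spatial x) y := by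
  rw [mink_eq, lift_zero, spatial_lift, mul_one]

lemma mink_horizontal : mink x (horizontal w) = inner ℝ (spatial x) w := by
  rw [mink_eq, horizontal_zero, spatial_horizontal, mul_zero, neg_zero, zero_add]

lemma mink_lift_lift : mink (lift y) (lift y) = ‖y‖ ^ 2 - 1 := by
  rw [mink_lift, lift_zero, spatial_lift, real_inner_self_eq_norm_sq]
  ring

lemma lift_add_smul : lift (y + t • w) = lift y + t • horizontal w := by
  refine ext_spatial (by simp) ?_
  ext i
  simp [spatial, lift, horizontal]

lemma lift_sub : lift y - lift w = horizontal (y - w) := by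
  refine ext_spatial (by simp) ?_
  ext i
  simp [spatial, lift, horizontal]

lemma lift_convex {a b : ℝ} (hab : a + b = 1) :
    lift (a • y + b • w) = a • lift y + b • lift w := by
  refine ext_spatial (by simp [hab]) ?_
  ext i
  simp [spatial, lift]

variable {x} in
lemma horizontal_spatial (hx : x 0 = 0) : horizontal (spatial x) = x :=
  ext_spatial (by simp [hx]) rfl

variable {x} in
lemma lift_kleinMap (hx : 0 < x 0) : lift (kleinMap x) = (x 0)⁻¹ • x := by
  refine ext_spatial (by simp [hx.ne']) ?_
  ext i
  simp [spatial, lift, kleinMap, div_eq_inv_mul]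

lemma kleinMap_smul_lift {r : ℝ} (hr : r ≠ 0) : kleinMap (r • lift y) = y := by
  ext i
  simp [kleinMap, lift, hr]

variable {x} in
lemma norm_kleinMap_sq (hx : 0 < x 0) : ‖kleinMap x‖ ^ 2 = 1 + (x 0)⁻¹ ^ 2 * mink x x := by
  have h := mink_lift_lift (kleinMap x)
  rw [lift_kleinMap hx, mink_smul_left, mink_smul_right] at h
  linarith

@[fun_prop]
lemma continuous_mink_lift : Continuous fun y : EuclideanSpace ℝ (Fin n) => mink x (lift y) := by
  simp only [mink_lift]
  fun_prop

lemma spatial_ne_zero {x : Fin (n + 1) → ℝ} (hx : mink x x = 1) : spatial x ≠ 0 := fun h => by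
  rw [mink_eq, h, inner_zero_left] at hx
  nlinarith [mul_self_nonneg (x 0)]

end KleinModel

/-- Near a point of the unit sphere there are infinitely many other points of the sphere. -/
lemma infinite_inter_sphere {s : EuclideanSpace ℝ (Fin 3)} (hs : ‖s‖ = 1)
    {U : Set (EuclideanSpace ℝ (Fin 3))} (hU : U ∈ nhds s) :
    (U ∩ Metric.sphere 0 1).Infinite := by
  have hpre : IsPreconnected (Metric.sphere (0 : EuclideanSpace ℝ (Fin 3)) 1) :=
    isPreconnected_sphere (by rw [← Module.finrank_eq_rank]; simp) 0 1
  have hnt : (Metric.sphere (0 : EuclideanSpace ℝ (Fin 3)) 1).Nontrivial := by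
    refine ⟨s, by simpa using hs, -s, by simpa using hs, fun h => ?_⟩
    have h2 : (2 : ℝ) • s = 0 := by rw [two_smul, ← sub_neg_eq_add, ← h, sub_self]
    rw [(smul_eq_zero.1 h2).resolve_left two_ne_zero, norm_zero] at hs
    exact zero_ne_one hs
  exact Set.Infinite.of_accPt
    ((hpre.preperfect_of_nontrivial hnt s (by simpa using hs)).nhds_inter hU)

namespace HypPolyhedron

section Closure

variable {n : ℕ} (P : HypPolyhedron n)

/-- The cone over the polyhedron. -/
def Cone (x : Fin (n + 1) → ℝ) : Prop := ∀ i, mink (P.e i) x ≤ 0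

lemma mem_image_carrier {y : EuclideanSpace ℝ (Fin n)} :
    y ∈ kleinMap '' P.carrier ↔ ‖y‖ < 1 ∧ P.Cone (lift y) := by
  constructor
  · rintro ⟨x, ⟨⟨hx, hx0⟩, hi⟩, rfl⟩
    refine ⟨?_, fun i => ?_⟩
    · rw [← sq_lt_one_iff₀ (norm_nonneg _), norm_kleinMap_sq hx0, hx]
      linarith [pow_pos (inv_pos.2 hx0) 2]
    · rw [lift_kleinMap hx0, mink_smul_right]
      exact mul_nonpos_of_nonneg_of_nonpos (inv_pos.2 hx0).le (hi i)
  · rintro ⟨hy, hi⟩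
    have h1 : 0 < 1 - ‖y‖ ^ 2 := by
      linarith [(sq_lt_one_iff₀ (norm_nonneg y)).2 hy]
    have hr : 0 < (Real.sqrt (1 - ‖y‖ ^ 2))⁻¹ := inv_pos.2 (Real.sqrt_pos.2 h1)
    refine ⟨(Real.sqrt (1 - ‖y‖ ^ 2))⁻¹ • lift y, ⟨⟨?_, by simpa using hr⟩, fun i => ?_⟩,
      kleinMap_smul_lift y hr.ne'⟩
    · rw [mink_smul_left, mink_smul_right, mink_lift_lift, ← mul_assoc, ← mul_inv,
        Real.mul_self_sqrt h1.le, inv_mul_eq_div, div_eq_iff h1.ne']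
      ring
    · rw [mink_smul_right]
      exact mul_nonpos_of_nonneg_of_nonpos hr.le (hi i)

/-- A point of the interior of the polyhedron. -/
lemma exists_interior :
    ∃ p : EuclideanSpace ℝ (Fin n), ‖p‖ < 1 ∧ ∀ i, mink (P.e i) (lift p) < 0 := by
  obtain ⟨p, hp⟩ := P.nonempty_int
  have hp' := P.mem_image_carrier.1 (interior_subset hp)
  refine ⟨p, hp'.1, fun i => lt_of_le_of_ne (hp'.2 i) fun h0 => ?_⟩
  have hc : ContinuousAt (fun t : ℝ => p + t • spatial (P.e i)) 0 := by fun_prop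
  have h1 := hc.preimage_mem_nhds (by simpa using mem_interior_iff_mem_nhds.1 hp)
  obtain ⟨t, ht, ht0⟩ := Filter.nonempty_of_mem (f := nhdsWithin (0 : ℝ) (Set.Ioi 0))
    (Filter.inter_mem (mem_nhdsWithin_of_mem_nhds h1) self_mem_nhdsWithin)
  have h2 := (P.mem_image_carrier.1 ht).2 i
  rw [lift_add_smul, mink_add_right, mink_smul_right, mink_horizontal, h0, zero_add,
    real_inner_self_eq_norm_sq] at h2
  have h3 := pow_pos (norm_pos_iff.2 (spatial_ne_zero (P.unit i))) 2
  exact absurd h2 (not_le.2 (mul_pos ht0 h3))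

lemma mem_cl {y : EuclideanSpace ℝ (Fin n)} : y ∈ P.cl ↔ ‖y‖ ≤ 1 ∧ P.Cone (lift y) := by
  constructor
  · intro hy
    refine closure_minimal (fun y hy => ?_) (t := {y | ‖y‖ ≤ 1 ∧ P.Cone (lift y)}) ?_ hy
    · exact ⟨(P.mem_image_carrier.1 hy).1.le, (P.mem_image_carrier.1 hy).2⟩
    · simp only [Cone, Set.ofPred_and, Set.ofPred_forall]
      exact (isClosed_le (by fun_prop) (by fun_prop)).inter
        (isClosed_iInter fun i => isClosed_le (by fun_prop) (by fun_prop))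
  · rintro ⟨hy, hi⟩
    obtain ⟨p, hp, hpi⟩ := P.exists_interior
    refine closure_mono ?_ (segment_subset_closure_openSegment (𝕜 := ℝ) (right_mem_segment ℝ p y))
    rintro _ ⟨a, b, ha, hb, hab, rfl⟩
    refine P.mem_image_carrier.2 ⟨?_, fun i => ?_⟩
    · calc ‖a • p + b • y‖ ≤ a * ‖p‖ + b * ‖y‖ := by
            refine (norm_add_le _ _).trans_eq ?_
            rw [norm_smul_of_nonneg ha.le, norm_smul_of_nonneg hb.le]
        _ < a * 1 + b * 1 := add_lt_add_of_lt_of_le (by gcongr) (by gcongr)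
        _ = 1 := by rw [mul_one, mul_one, hab]
    · rw [lift_convex _ _ hab, mink_add_right, mink_smul_right, mink_smul_right]
      exact add_nonpos (mul_nonpos_of_nonneg_of_nonpos ha.le (hpi i).le)
        (mul_nonpos_of_nonneg_of_nonpos hb.le (hi i))

lemma mem_verts_of_norm_eq_one {y : EuclideanSpace ℝ (Fin n)} (hy : y ∈ P.cl) (h1 : ‖y‖ = 1) :
    y ∈ P.verts := by
  refine fun _ => ⟨innerSL ℝ y, ?_⟩
  ext z
  simp only [Set.mem_singleton_iff, Set.mem_ofPred_eq, innerSL_apply_apply]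
  have hle : ∀ w ∈ P.cl, inner ℝ y w ≤ 1 := fun w hw => by
    refine (real_inner_le_norm y w).trans ?_
    rw [h1, one_mul]
    exact (P.mem_cl.1 hw).1
  have hyy : inner ℝ y y = 1 := by rw [real_inner_self_eq_norm_sq, h1, one_pow]
  constructor
  · rintro rfl
    exact ⟨hy, fun w hw => (hle w hw).trans_eq hyy.symm⟩
  · rintro ⟨hz, hmax⟩
    have h2 : 1 ≤ inner ℝ y z := hyy ▸ hmax y hy
    have h3 := norm_sub_sq_real z y
    rw [real_inner_comm, h1] at h3
    have h4 : ‖z‖ ^ 2 ≤ 1 := pow_le_one₀ (norm_nonneg _) (P.mem_cl.1 hz).1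
    have h5 : ‖z - y‖ ^ 2 = 0 := le_antisymm (by linarith) (sq_nonneg _)
    exact sub_eq_zero.1 (norm_eq_zero.1 (pow_eq_zero_iff two_ne_zero |>.1 h5))

lemma finite_faces (hfv : P.FiniteVolume) (k : ℕ) : (P.faces k).Finite := by
  have hcomp : IsCompact P.cl :=
    (isCompact_closedBall (0 : EuclideanSpace ℝ (Fin n)) 1).of_isClosed_subset isClosed_closure
      fun y hy => by simpa using (P.mem_cl.1 hy).1
  have hconv : Convex ℝ P.cl := hfv.2 ▸ convex_convexHull ℝ _
  refine Set.Finite.of_finite_image (f := Set.extremePoints ℝ)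
    (hfv.1.finite_subsets.subset ?_) fun F hF G hG hFG => ?_
  · rintro _ ⟨F, hF, rfl⟩
    refine hF.1.isExtreme.extremePoints_subset_extremePoints.trans ?_
    rw [hfv.2]
    exact extremePoints_convexHull_subset
  · have hF' := closure_convexHull_extremePoints (hF.1.isCompact hcomp) (hF.1.convex hconv)
    have hG' := closure_convexHull_extremePoints (hG.1.isCompact hcomp) (hG.1.convex hconv)
    rw [← hF', ← hG']
    exact congrArg (fun s => closure (convexHull ℝ s)) hFG

/-- A linear functional which is nonpositive on the polyhedron cuts out an exposed face. -/
lemma isExposed_of_mink_nonpos (v : Fin (n + 1) → ℝ) (hv : ∀ y ∈ P.cl, mink v (lift y) ≤ 0) :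
    IsExposed ℝ P.cl {y ∈ P.cl | mink v (lift y) = 0} := by
  rintro ⟨q, hq, hq0⟩
  refine ⟨innerSL ℝ (spatial v), ?_⟩
  ext y
  simp only [Set.mem_ofPred_eq, innerSL_apply_apply, and_congr_right_iff]
  simp only [mink_lift] at *
  intro hy
  exact ⟨fun h w hw => by linarith [hv w hw], fun h => by linarith [h q hq, hv y hy]⟩

end Closure

section Dimension

variable {P : HypPolyhedron 3}

lemma norm_le_one (hfv : P.FiniteVolume) {q : EuclideanSpace ℝ (Fin 3)} (hq : P.Cone (lift q)) :
    ‖q‖ ≤ 1 := by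
  by_contra! hq1
  obtain ⟨p, hp, hpi⟩ := P.exists_interior
  have hc : ContinuousOn (fun t : ℝ => ‖(1 - t) • p + t • q‖) (Set.Icc 0 1) := by fun_prop
  obtain ⟨t, ⟨ht0, ht1⟩, ht⟩ := intermediate_value_Ioo zero_le_one hc
    (show (1 : ℝ) ∈ Set.Ioo _ _ by simpa using ⟨hp, hq1⟩)
  set s := (1 - t) • p + t • q
  have hU : {y | ∀ i, mink (P.e i) (lift y) < 0} ∈ nhds s := by
    refine IsOpen.mem_nhds ?_ fun i => ?_
    · simp only [Set.ofPred_forall]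
      exact isOpen_iInter_of_finite fun i => isOpen_lt (by fun_prop) (by fun_prop)
    · rw [lift_convex _ _ (by ring), mink_add_right, mink_smul_right, mink_smul_right]
      exact add_neg_of_neg_of_nonpos (mul_neg_of_pos_of_neg (by linarith) (hpi i))
        (mul_nonpos_of_nonneg_of_nonpos ht0.le (hq i))
  refine infinite_inter_sphere ht hU (hfv.1.subset ?_)
  rintro y ⟨hy, hy1⟩
  have hy1' : ‖y‖ = 1 := by simpa using hy1
  exact P.mem_verts_of_norm_eq_one (P.mem_cl.2 ⟨hy1'.le, fun i => (hy i).le⟩) hy1'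

lemma nonempty_index (hfv : P.FiniteVolume) : Nonempty (Fin P.m) := by
  by_contra h
  rw [not_nonempty_iff] at h
  have := norm_le_one hfv (q := EuclideanSpace.single 0 2) fun i => isEmptyElim i
  norm_num at this

lemma cone_causal (hfv : P.FiniteVolume) {x : Fin (3 + 1) → ℝ} (hx : P.Cone x) (hx0 : x ≠ 0) :
    0 < x 0 ∧ mink x x ≤ 0 := by
  rcases lt_or_ge 0 (x 0) with h | h
  · refine ⟨h, ?_⟩
    have h1 := norm_le_one hfv (q := kleinMap x) fun i => by
      rw [lift_kleinMap h, mink_smul_right]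
      exact mul_nonpos_of_nonneg_of_nonpos (inv_pos.2 h).le (hx i)
    have h2 := norm_kleinMap_sq h
    have h3 := pow_le_one₀ (norm_nonneg _) h1 (n := 2)
    exact nonpos_of_mul_nonpos_right (by linarith) (pow_pos (inv_pos.2 h) 2)
  exfalso
  obtain ⟨p, hp, hpi⟩ := P.exists_interior
  set w := x - x 0 • lift p with hw
  have hw0 : w 0 = 0 := by simp [w]
  have hwC : P.Cone w := fun i => by
    rw [hw, mink_sub_right, mink_smul_right]
    linarith [hx i, mul_nonneg_of_nonpos_of_nonpos h (hpi i).le]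
  by_cases hw' : spatial w = 0
  · have hxe : x = x 0 • lift p := by
      rw [← sub_eq_zero]
      exact ext_spatial hw0 hw'
    obtain ⟨i⟩ := nonempty_index hfv
    have h1 := hx i
    rw [hxe, mink_smul_right] at h1
    have h2 : x 0 = 0 := le_antisymm h (by nlinarith [hpi i])
    rw [h2, zero_smul] at hxe
    exact hx0 hxe
  · have hpos := norm_pos_iff.2 hw'
    have h1 := norm_le_one hfv (q := p + (3 / ‖spatial w‖) • spatial w) fun i => by
      rw [lift_add_smul, mink_add_right, mink_smul_right, horizontal_spatial hw0]
      exact add_nonpos (hpi i).le (mul_nonpos_of_nonneg_of_nonpos (by positivity) (hwC i))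
    have h2 := norm_sub_le (p + (3 / ‖spatial w‖) • spatial w) p
    rw [add_sub_cancel_left, norm_smul_of_nonneg (by positivity), div_mul_cancel₀ _ hpos.ne'] at h2
    linarith

lemma kleinMap_mem_cl (hfv : P.FiniteVolume) {x : Fin (3 + 1) → ℝ} (hx : P.Cone x) (hx0 : 0 < x 0) :
    kleinMap x ∈ P.cl := by
  have h : P.Cone (lift (kleinMap x)) := fun i => by
    rw [lift_kleinMap hx0, mink_smul_right]
    exact mul_nonpos_of_nonneg_of_nonpos (inv_pos.2 hx0).le (hx i)
  exact P.mem_cl.2 ⟨norm_le_one hfv h, h⟩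

lemma vectorSpan_le_orthogonal {v : Fin (3 + 1) → ℝ} {F : Set (EuclideanSpace ℝ (Fin 3))}
    (hF : ∀ y ∈ F, mink v (lift y) = 0) : vectorSpan ℝ F ≤ (ℝ ∙ spatial v)ᗮ := by
  rw [vectorSpan_def, Submodule.span_le]
  rintro _ ⟨y, hy, z, hz, rfl⟩
  change y - z ∈ (ℝ ∙ spatial v)ᗮ
  rw [Submodule.mem_orthogonal_singleton_iff_inner_right, ← mink_horizontal, ← lift_sub,
    mink_sub_right, hF y hy, hF z hz, sub_zero]

lemma mem_faces_one (hfv : P.FiniteVolume) {u v x d : Fin (3 + 1) → ℝ}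
    (hu : ∀ y, P.Cone y → mink u y ≤ 0) (hv : ∀ y, P.Cone y → mink v y ≤ 0)
    (hx : P.Cone x) (hxd : P.Cone (x + d)) (hx0 : 0 < x 0) (hd : d ≠ 0) (hd0 : d 0 = 0)
    (hux : mink u x = 0) (hvx : mink v x = 0) (hud : mink u d = 0) (hvd : mink v d = 0)
    (hli : LinearIndependent ℝ ![u, v]) :
    {y ∈ P.cl | mink (u + v) (lift y) = 0} ∈ P.faces 1 := by
  have hxd0 : 0 < (x + d) 0 := by simpa [hd0] using hx0
  have h1 : kleinMap x ∈ {y ∈ P.cl | mink (u + v) (lift y) = 0} := by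
    refine ⟨kleinMap_mem_cl hfv hx hx0, ?_⟩
    rw [lift_kleinMap hx0, mink_smul_right, mink_add_left, hux, hvx, add_zero, mul_zero]
  have h2 : kleinMap (x + d) ∈ {y ∈ P.cl | mink (u + v) (lift y) = 0} := by
    refine ⟨kleinMap_mem_cl hfv hxd hxd0, ?_⟩
    rw [lift_kleinMap hxd0, mink_smul_right, mink_add_left, mink_add_right, mink_add_right, hux,
      hvx, hud, hvd, add_zero, add_zero, mul_zero]
  have hcl : ∀ y ∈ P.cl, mink u (lift y) ≤ 0 ∧ mink v (lift y) ≤ 0 := fun y hy =>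
    ⟨hu _ (P.mem_cl.1 hy).2, hv _ (P.mem_cl.1 hy).2⟩
  refine ⟨P.isExposed_of_mink_nonpos _ fun y hy => ?_, ⟨_, h1⟩, le_antisymm ?_ ?_⟩
  · rw [mink_add_left]
    exact add_nonpos (hcl y hy).1 (hcl y hy).2
  · have hu' := vectorSpan_le_orthogonal (F := {y ∈ P.cl | mink (u + v) (lift y) = 0}) (v := u)
      fun y ⟨hy, hy0⟩ => by
        rw [mink_add_left] at hy0
        linarith [hcl y hy]
    have hv' := vectorSpan_le_orthogonal (F := {y ∈ P.cl | mink (u + v) (lift y) = 0}) (v := v)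
      fun y ⟨hy, hy0⟩ => by
        rw [mink_add_left] at hy0
        linarith [hcl y hy]
    have hle := le_inf hu' hv'
    rw [Submodule.inf_orthogonal, ← Submodule.span_union, Set.singleton_union] at hle
    have hli' : LinearIndependent ℝ ![spatial u, spatial v] := by
      rw [LinearIndependent.pair_iff] at hli ⊢
      intro a b hab
      refine hli a b (ext_spatial ?_ ?_)
      · have h := congrArg (inner ℝ · (spatial x)) hab
        simp only [inner_add_left, inner_smul_left, inner_zero_left] at h
        rw [mink_eq] at hux hvx
        have h3 : (a * u 0 + b * v 0) * x 0 = 0 := by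
          simp at h
          linear_combination h - a * hux - b * hvx
        simpa using (mul_eq_zero.1 h3).resolve_right hx0.ne'
      · exact hab
    have hrank := finrank_span_eq_card hli'
    have hsum := Submodule.finrank_add_finrank_orthogonal
      (Submodule.span ℝ (Set.range ![spatial u, spatial v]))
    rw [hrank] at hsum
    rw [Matrix.range_cons, Matrix.range_cons, Matrix.range_empty, Set.union_empty,
      Set.singleton_union] at hsum
    simp at hsum
    refine (Submodule.finrank_mono hle).trans ?_
    omega
  · rw [Nat.one_le_iff_ne_zero, sdim, Ne, Submodule.finrank_eq_zero]
    intro hbot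
    have h3 := vsub_mem_vectorSpan ℝ h2 h1
    rw [hbot, Submodule.mem_bot, vsub_eq_sub, sub_eq_zero] at h3
    have h4 := congrArg lift h3
    rw [lift_kleinMap hxd0, lift_kleinMap hx0, Pi.add_apply, hd0, add_zero, smul_add,
      add_eq_left, smul_eq_zero] at h4
    exact h4.elim (inv_pos.2 hx0).ne' hd

lemma mem_faces_two (hfv : P.FiniteVolume) {I : Finset (Fin P.m)}
    (hI : ∀ v, (∀ l ∈ I, mink (P.e l) v ≤ 0) → P.Cone v) {i : Fin P.m}
    {y : Fin (3 + 1) → ℝ} (hyi : mink (P.e i) y = 0) (hy : ∀ l ∈ I, l ≠ i → mink (P.e l) y < 0)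
    (hy0 : 0 < y 0) (hyC : P.Cone y) :
    {z ∈ P.cl | mink (P.e i) (lift z) = 0} ∈ P.faces 2 := by
  classical
  have h1 : kleinMap y ∈ {z ∈ P.cl | mink (P.e i) (lift z) = 0} := by
    refine ⟨kleinMap_mem_cl hfv hyC hy0, ?_⟩
    rw [lift_kleinMap hy0, mink_smul_right, hyi, mul_zero]
  refine ⟨P.isExposed_of_mink_nonpos _ fun z hz => (P.mem_cl.1 hz).2 i, ⟨_, h1⟩, ?_⟩
  have : Fact (Module.finrank ℝ (EuclideanSpace ℝ (Fin 3)) = 2 + 1) := ⟨by simp⟩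
  suffices h : (ℝ ∙ spatial (P.e i))ᗮ ≤
      vectorSpan ℝ {z ∈ P.cl | mink (P.e i) (lift z) = 0} by
    rw [sdim, le_antisymm (vectorSpan_le_orthogonal fun z hz => hz.2) h]
    exact Submodule.finrank_orthogonal_span_singleton (spatial_ne_zero (P.unit i))
  intro w hw
  rw [Submodule.mem_orthogonal_singleton_iff_inner_right, ← mink_horizontal] at hw
  obtain ⟨ε, hε, h⟩ := exists_pos_forall_add_mul_neg (I.erase i)
    (fun l => mink (P.e l) (lift (kleinMap y))) (fun l => mink (P.e l) (horizontal w))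
    (fun l hl => by
      rw [lift_kleinMap hy0, mink_smul_right]
      exact mul_neg_of_pos_of_neg (inv_pos.2 hy0)
        (hy l (Finset.mem_erase.1 hl).2 (Finset.mem_erase.1 hl).1))
  have hi : mink (P.e i) (lift (kleinMap y + ε • w)) = 0 := by
    rw [lift_add_smul, mink_add_right, mink_smul_right, hw, h1.2, mul_zero, add_zero]
  have hC : P.Cone (lift (kleinMap y + ε • w)) := hI _ fun l hl => by
    by_cases hli : l = i
    · rw [hli, hi]
    · rw [lift_add_smul, mink_add_right, mink_smul_right]
      exact (h l (Finset.mem_erase.2 ⟨hli, hl⟩)).le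
  have h2 : kleinMap y + ε • w ∈ {z ∈ P.cl | mink (P.e i) (lift z) = 0} :=
    ⟨P.mem_cl.2 ⟨norm_le_one hfv hC, hC⟩, hi⟩
  have h3 := vsub_mem_vectorSpan ℝ h2 h1
  rw [vsub_eq_sub, add_sub_cancel_left] at h3
  simpa [smul_smul, hε.ne'] using Submodule.smul_mem _ ε⁻¹ h3

end Dimension

/-- The cone over a right-angled polyhedron, described by a minimal set of half-spaces. -/
def coneOf {P : HypPolyhedron 3} (hfv : P.FiniteVolume) (hra : P.IsRightAngled) (hv : P.vInf ≤ 1)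
    {p : EuclideanSpace ℝ (Fin 3)} (hp : ‖p‖ < 1) (hpi : ∀ i, mink (P.e i) (lift p) < 0)
    {I : Finset (Fin P.m)} (hI : ∀ v, (∀ l ∈ I, mink (P.e l) v ≤ 0) → P.Cone v)
    {y : I → Fin (3 + 1) → ℝ} (hy : ∀ i : I, mink (P.e i) (y i) = 0)
    (hyn : ∀ i j : I, j ≠ i → mink (P.e j) (y i) < 0) : RightAngledCone I where
  e i := P.e i
  p := lift p
  y := y
  unit i := P.unit i
  p_neg i := hpi i
  p_time := by
    rw [mink_lift_lift]
    linarith [(sq_lt_one_iff₀ (norm_nonneg p)).2 hp]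
  y_zero := hy
  y_neg := hyn
  causal x hx := cone_causal hfv (hI x fun l hl => hx ⟨l, hl⟩)
  right_angled i j hij x d hx hxd hx0 hd hd0 hix hjx hid hjd := by
    have hli : LinearIndependent ℝ ![P.e i, P.e j] := by
      rw [LinearIndependent.pair_iff]
      intro a b hab
      have h1 := congrArg (mink (y i)) hab
      rw [mink_add_right, mink_smul_right, mink_smul_right, mink_zero_right, mink_comm, hy,
        mul_zero, zero_add, mink_comm] at h1
      have hb := (mul_eq_zero.1 h1).resolve_right (hyn i j hij.symm).ne
      have h2 := congrArg (mink (P.e i)) hab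
      rw [hb, zero_smul, add_zero, mink_smul_right, P.unit, mink_zero_right, mul_one] at h2
      exact ⟨h2, hb⟩
    refine hra i j (fun h => hij (Subtype.ext h)) ⟨_, mem_faces_one hfv (fun y hy => hy i)
      (fun y hy => hy j) (hI x fun l hl => hx ⟨l, hl⟩) (hI _ fun l hl => hxd ⟨l, hl⟩) hx0 hd hd0
      hix hjx hid hjd hli, fun z hz hzF => ?_, fun z hz hzF => ?_⟩ <;>
    · have h1 := hzF.2
      rw [lift_kleinMap hz.1.2, mink_smul_right, mink_add_left] at h1
      have h2 := (mul_eq_zero.1 h1).resolve_left (inv_pos.2 hz.1.2).ne'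
      linarith [hz.2 i, hz.2 j]
  null_unique x x' hx hx' hx0 hx0' hxx hxx' := by
    have hC := hI x fun l hl => hx ⟨l, hl⟩
    have hC' := hI x' fun l hl => hx' ⟨l, hl⟩
    have h0 := (cone_causal hfv hC hx0).1
    have h0' := (cone_causal hfv hC' hx0').1
    have hideal : ∀ z : Fin (3 + 1) → ℝ, P.Cone z → 0 < z 0 → mink z z = 0 →
        kleinMap z ∈ P.idealVerts := fun z hz hz0 hzz => by
      have h1 : ‖kleinMap z‖ = 1 := by
        rw [← pow_eq_one_iff_of_nonneg (norm_nonneg _) two_ne_zero, norm_kleinMap_sq hz0, hzz,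
          mul_zero,
          add_zero]
      exact ⟨P.mem_verts_of_norm_eq_one (kleinMap_mem_cl hfv hz hz0) h1, h1⟩
    have heq := congrArg lift ((Set.ncard_le_one (hfv.1.subset fun z hz => hz.1)).1 hv _
      (hideal x hC h0 hxx) _ (hideal x' hC' h0' hxx'))
    rw [lift_kleinMap h0, lift_kleinMap h0'] at heq
    have h2 := congrArg ((x 0 * x' 0) • ·) heq
    simp only [smul_smul] at h2
    rw [mul_inv_cancel_right₀ h0'.ne', mul_comm (x 0), mul_inv_cancel_right₀ h0.ne'] at h2
    exact h2.symm

end HypPolyhedron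

/-- A finite-volume right-angled convex hyperbolic `3`-polyhedron with at most one ideal
vertex has at least `12` faces. -/
theorem faces_of_3_polyhedron_with_at_most_one_cusp (P : HypPolyhedron 3)
    (hfv : P.FiniteVolume) (hra : P.IsRightAngled) (hv : P.vInf ≤ 1) :
    12 ≤ P.a 2 := by
  obtain ⟨p, hp, hpi⟩ := P.exists_interior
  obtain ⟨I, -, hI, hz⟩ := exists_irredundant ⊤ Finset.univ (fun i => minkL (P.e i))
    (p := lift p) trivial (fun i _ => hpi i)
  replace hI : ∀ v, (∀ l ∈ I, mink (P.e l) v ≤ 0) → P.Cone v := fun v hv i =>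
    hI v trivial hv i (Finset.mem_univ i)
  choose y hy using fun i : I => hz i i.2
  replace hy : (∀ i : I, mink (P.e i) (y i) = 0) ∧
      ∀ i : I, ∀ l ∈ I, l ≠ i → mink (P.e l) (y i) < 0 :=
    ⟨fun i => (hy i).2.1, fun i => (hy i).2.2⟩
  have hyn : ∀ i j : I, j ≠ i → mink (P.e j) (y i) < 0 := fun i j hij =>
    hy.2 i j j.2 fun h => hij (Subtype.ext h)
  have hIne : Nonempty I := by
    by_contra h
    rw [not_nonempty_iff] at h
    have h1 : P.Cone (-lift p) := hI _ fun l hl => isEmptyElim (⟨l, hl⟩ : I)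
    obtain ⟨i⟩ := HypPolyhedron.nonempty_index hfv
    have h2 := h1 i
    rw [mink_neg_right] at h2
    linarith [hpi i]
  have hyC : ∀ i, P.Cone (y i) := fun i => hI _ fun l hl => by
    by_cases hli : l = i
    · rw [hli, hy.1]
    · exact (hy.2 i l hl hli).le
  let K := HypPolyhedron.coneOf hfv hra hv hp hpi hI hy.1 hyn
  have hcard : 12 ≤ Fintype.card I := K.toFaceGraph.twelve_le_card
  have hy0 : ∀ i, 0 < y i 0 := fun i => by
    refine (HypPolyhedron.cone_causal hfv (hyC i) fun h0 => ?_).1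
    obtain ⟨j, hj⟩ := K.exists_orthogonal i
    have h1 := hyn i j (K.ne_of_mink_eq_zero hj).symm
    rw [h0, mink_zero_right] at h1
    exact lt_irrefl _ h1
  have hinj : Function.Injective
      fun i : I => {z ∈ P.cl | mink (P.e i) (lift z) = 0} := fun i j hij => by
    by_contra hne
    have h1 : kleinMap (y i) ∈ {z ∈ P.cl | mink (P.e j) (lift z) = 0} := by
      rw [← show _ = {z ∈ P.cl | mink (P.e j) (lift z) = 0} from hij]
      refine ⟨HypPolyhedron.kleinMap_mem_cl hfv (hyC i) (hy0 i), ?_⟩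
      rw [lift_kleinMap (hy0 i), mink_smul_right, hy.1, mul_zero]
    have h2 := h1.2
    rw [lift_kleinMap (hy0 i), mink_smul_right] at h2
    exact (mul_neg_of_pos_of_neg (inv_pos.2 (hy0 i)) (hyn i j fun h => hne h.symm)).ne h2
  calc 12 ≤ Fintype.card I := hcard
    _ = (Set.range fun i : I => {z ∈ P.cl | mink (P.e i) (lift z) = 0}).ncard := by
      rw [← Set.image_univ, Set.ncard_image_of_injective _ hinj, Set.ncard_univ,
        Nat.card_eq_fintype_card]
    _ ≤ P.a 2 := Set.ncard_le_ncard (by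
      rintro _ ⟨i, rfl⟩
      exact HypPolyhedron.mem_faces_two hfv hI (hy.1 i) (hy.2 i) (hy0 i) (hyC i))
      (P.finite_faces hfv 2)
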